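/- arXiv:2005.12098 — 8 statements merged into one kernel-verified Lean document; each statement's English description precedes it below -/
import Mathlib

section
/- Let (Ω, F, P) be a probability space, let Z be an integrable real random variable and let t ≥ 0. Then for every w ∈ ℝ there exists a unique z̄ ∈ ℝ such that E[h(t, Z − E[Z] + z̄)] = w; that is, the map z ↦ E[h(t, Z − E[Z] + z)] is a strictly increasing continuous bijection from ℝ onto ℝ. -/
open MeasureTheory Filter Set Function Topology

noncomputable section

/-- A function with values in a topological space is càdlàg on `[0,∞)`:
right-continuous at every `t ≥ 0` and admitting a left limit at every `t > 0`. -/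
def CadlagOn {E : Type*} [TopologicalSpace E] (f : ℝ → E) : Prop :=
  (∀ t : ℝ, 0 ≤ t → ContinuousWithinAt f (Set.Ici t) t) ∧
  ∀ t : ℝ, 0 < t → ∃ L : E, Filter.Tendsto f (nhdsWithin t (Set.Iio t)) (nhds L)

/-- Condition (H) on `h : [0,∞) × ℝ → ℝ` with constants `Mh, Lh, ch, Ch`. -/
structure CondH (h : ℝ → ℝ → ℝ) (Mh Lh ch Ch : ℝ) : Prop where
  meas : Measurable (Function.uncurry h)
  Mh_pos : 0 < Mh
  Lh_pos : 0 < Lh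
  ch_pos : 0 < ch
  Ch_pos : 0 < Ch
  growth : ∀ t x : ℝ, 0 ≤ t → |h t x| ≤ Mh * (1 + |x|)
  strict_mono : ∀ t : ℝ, 0 ≤ t → StrictMono (h t)
  lip_time : ∀ s t x : ℝ, 0 ≤ s → 0 ≤ t → |h t x - h s x| ≤ Lh * |t - s|
  lip_lower : ∀ t x y : ℝ, 0 ≤ t → ch * |x - y| ≤ |h t x - h t y|
  lip_upper : ∀ t x y : ℝ, 0 ≤ t → |h t x - h t y| ≤ Ch * |x - y|

/-- A process with càdlàg paths, integrable values, and values uniformly integrable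
on every compact time interval. -/
structure NiceProcess {Ω : Type*} [MeasurableSpace Ω] (μ : Measure Ω) (Y : ℝ → Ω → ℝ) : Prop where
  cadlag : ∀ ω, CadlagOn fun t => Y t ω
  integrable : ∀ t : ℝ, 0 ≤ t → Integrable (Y t) μ
  unifInt : ∀ q : ℝ, 0 ≤ q → UniformIntegrable (fun t : Set.Icc (0:ℝ) q => Y t.1) 1 μ

/-- Solution of the Skorokhod problem with mean minimality condition and two constraints
associated with `(h, Y, l, u)`. -/
def MeanSP {Ω : Type*} [MeasurableSpace Ω] (μ : Measure Ω) (h : ℝ → ℝ → ℝ)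
    (Y : ℝ → Ω → ℝ) (l u : ℝ → ℝ) (X : ℝ → Ω → ℝ) (k : ℝ → ℝ) : Prop :=
  (∀ ω, CadlagOn fun t => X t ω) ∧ CadlagOn k ∧ k 0 = 0 ∧
  (∀ t : ℝ, 0 ≤ t → ∀ ω, X t ω = Y t ω + k t) ∧
  (∀ t : ℝ, 0 ≤ t → (∫ ω, h t (X t ω) ∂μ) ∈ Set.Icc (l t) (u t)) ∧
  (∀ t q : ℝ, 0 ≤ t → t ≤ q →
    ((∀ s : ℝ, t < s → s ≤ q → (∫ ω, h s (X s ω) ∂μ) < u s) → 0 ≤ k q - k t) ∧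
    ((∀ s : ℝ, t < s → s ≤ q → l s < ∫ ω, h s (X s ω) ∂μ) → k q - k t ≤ 0)) ∧
  ∀ t : ℝ, 0 < t →
    ((∫ ω, h t (X t ω) ∂μ) < u t → 0 ≤ k t - Function.leftLim k t) ∧
    (l t < ∫ ω, h t (X t ω) ∂μ → k t - Function.leftLim k t ≤ 0)

/-- Solution of the deterministic Skorokhod problem with two time-dependent barriers. -/
def DetSP (y lb ub x k : ℝ → ℝ) : Prop :=
  CadlagOn x ∧ CadlagOn k ∧ k 0 = 0 ∧
  (∀ t : ℝ, 0 ≤ t → x t = y t + k t ∧ x t ∈ Set.Icc (lb t) (ub t)) ∧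
  (∀ t q : ℝ, 0 ≤ t → t ≤ q →
    ((∀ s : ℝ, t < s → s ≤ q → x s < ub s) → 0 ≤ k q - k t) ∧
    ((∀ s : ℝ, t < s → s ≤ q → lb s < x s) → k q - k t ≤ 0)) ∧
  ∀ t : ℝ, 0 < t →
    (x t < ub t → 0 ≤ k t - Function.leftLim k t) ∧
    (lb t < x t → k t - Function.leftLim k t ≤ 0)

/-- Solution of the Skorokhod problem with mean minimality condition and a single
lower barrier `l`.  The minimality condition `∫ (E[h(s,X_s)] - l_s) dk_s = 0` is expressed
through any measure `ν` that agrees with the Lebesgue–Stieltjes measure of `k` on `[0,∞)`. -/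
def MeanSPLower {Ω : Type*} [MeasurableSpace Ω] (μ : Measure Ω) (h : ℝ → ℝ → ℝ)
    (Y : ℝ → Ω → ℝ) (l : ℝ → ℝ) (X : ℝ → Ω → ℝ) (k : ℝ → ℝ) : Prop :=
  (∀ ω, CadlagOn fun t => X t ω) ∧ CadlagOn k ∧ k 0 = 0 ∧
  (∀ t : ℝ, 0 ≤ t → ∀ ω, X t ω = Y t ω + k t) ∧
  (∀ t : ℝ, 0 ≤ t → l t ≤ ∫ ω, h t (X t ω) ∂μ) ∧
  MonotoneOn k (Set.Ici 0) ∧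
  ∀ ν : Measure ℝ,
    (∀ a b : ℝ, 0 ≤ a → a ≤ b → ν (Set.Ioc a b) = ENNReal.ofReal (k b - k a)) →
    ν {0} = 0 →
    ∀ t : ℝ, 0 ≤ t → (∫ s in Set.Icc 0 t, ((∫ ω, h s (X s ω) ∂μ) - l s) ∂ν) = 0

/-- Solution of the Skorokhod problem with mean minimality condition and a single
upper barrier `u`.  The minimality condition `∫ (u_s - E[h(s,X_s)]) d(-k)_s = 0` is expressed
through any measure `ν` that agrees with the Lebesgue–Stieltjes measure of `-k` on `[0,∞)`. -/
def MeanSPUpper {Ω : Type*} [MeasurableSpace Ω] (μ : Measure Ω) (h : ℝ → ℝ → ℝ)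
    (Y : ℝ → Ω → ℝ) (u : ℝ → ℝ) (X : ℝ → Ω → ℝ) (k : ℝ → ℝ) : Prop :=
  (∀ ω, CadlagOn fun t => X t ω) ∧ CadlagOn k ∧ k 0 = 0 ∧
  (∀ t : ℝ, 0 ≤ t → ∀ ω, X t ω = Y t ω + k t) ∧
  (∀ t : ℝ, 0 ≤ t → (∫ ω, h t (X t ω) ∂μ) ≤ u t) ∧
  AntitoneOn k (Set.Ici 0) ∧
  ∀ ν : Measure ℝ,
    (∀ a b : ℝ, 0 ≤ a → a ≤ b → ν (Set.Ioc a b) = ENNReal.ofReal (k a - k b)) →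
    ν {0} = 0 →
    ∀ t : ℝ, 0 ≤ t → (∫ s in Set.Icc 0 t, (u s - ∫ ω, h s (X s ω) ∂μ) ∂ν) = 0

/-- `OscN x η q` is the number of `η`-oscillations of `x` on `[0,q]`: the largest `m`
for which there are `0 ≤ t₁ ≤ t₂ ≤ ⋯ ≤ t_{2m} ≤ q` with `|x(t_{2i}) - x(t_{2i-1})| > η`. -/
def OscN (x : ℝ → ℝ) (η q : ℝ) : ℕ :=
  sSup {m : ℕ | ∃ a b : Fin m → ℝ,
    (∀ i, 0 ≤ a i ∧ a i ≤ b i ∧ b i ≤ q) ∧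
    (∀ i j, i < j → b i ≤ a j) ∧
    ∀ i, η < |x (b i) - x (a i)|}

/-- The left limit at `t` of a càdlàg function on `[0,∞)`, with the convention
`x(0-) = x(0)`. -/
def leftLimAt {E : Type*} [TopologicalSpace E] (x : ℝ → E) (t : ℝ) : E :=
  if t = 0 then x 0 else Function.leftLim x t

/-- Convergence `xₙ → x` in the Skorokhod `J₁` topology on `D([0,∞), E)`, expressed via
the sequence characterization used in the paper. -/
def DConvOn {E : Type*} [TopologicalSpace E] (xs : ℕ → ℝ → E) (x : ℝ → E) : Prop :=
  ∀ t : ℝ, 0 ≤ t → ∃ tn : ℕ → ℝ,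
    (∀ n, 0 ≤ tn n) ∧ Filter.Tendsto tn Filter.atTop (nhds t) ∧
    ∀ t' t'' : ℕ → ℝ, (∀ n, 0 ≤ t' n) → (∀ n, 0 ≤ t'' n) →
      Filter.Tendsto t' Filter.atTop (nhds t) → Filter.Tendsto t'' Filter.atTop (nhds t) →
      (∀ n, t' n < tn n ∧ tn n ≤ t'' n) →
      Filter.Tendsto (fun n => xs n (t' n)) Filter.atTop (nhds (leftLimAt x t)) ∧
      Filter.Tendsto (fun n => xs n (t'' n)) Filter.atTop (nhds (x t))

/-- `z ↦ E[h(t, Z - E Z + z)]` is a strictly increasing continuous bijection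
of `ℝ` onto `ℝ`; in particular every value `w` is attained at a unique point. -/
theorem stmt_1 {Ω : Type*} [MeasurableSpace Ω] (μ : Measure Ω) [IsProbabilityMeasure μ]
    (h : ℝ → ℝ → ℝ) (Mh Lh ch Ch : ℝ) (hH : CondH h Mh Lh ch Ch)
    (Z : Ω → ℝ) (hZ : Integrable Z μ) (t : ℝ) (ht : 0 ≤ t) :
    (∀ w : ℝ, ∃! z : ℝ, (∫ ω, h t (Z ω - (∫ ω', Z ω' ∂μ) + z) ∂μ) = w) ∧
    StrictMono (fun z : ℝ => ∫ ω, h t (Z ω - (∫ ω', Z ω' ∂μ) + z) ∂μ) ∧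
    Continuous (fun z : ℝ => ∫ ω, h t (Z ω - (∫ ω', Z ω' ∂μ) + z) ∂μ) ∧
    Function.Bijective (fun z : ℝ => ∫ ω, h t (Z ω - (∫ ω', Z ω' ∂μ) + z) ∂μ) := by
  set m : ℝ := ∫ ω', Z ω' ∂μ with hm
  have hmeas : Measurable (h t) := hH.meas.comp measurable_prodMk_left
  have hint : ∀ z : ℝ, Integrable (fun ω => h t (Z ω - m + z)) μ := by
    intro z
    have hX : Integrable (fun ω => Z ω - m + z) μ :=
      (hZ.sub (integrable_const m)).add (integrable_const z)
    refine Integrable.mono' (((integrable_const (1:ℝ)).add hX.abs).const_mul Mh)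
      (hmeas.comp_aemeasurable hX.aemeasurable).aestronglyMeasurable ?_
    filter_upwards with ω
    exact hH.growth t _ ht
  set F : ℝ → ℝ := fun z : ℝ => ∫ ω, h t (Z ω - m + z) ∂μ with hF
  have hsub : ∀ a b : ℝ, F b - F a = ∫ ω, (h t (Z ω - m + b) - h t (Z ω - m + a)) ∂μ := by
    intro a b
    exact (integral_sub (hint b) (hint a)).symm
  have hpt : ∀ a b x : ℝ, a ≤ b → ch * (b - a) ≤ h t (x + b) - h t (x + a) ∧
      h t (x + b) - h t (x + a) ≤ Ch * (b - a) := by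
    intro a b x hab
    have h1 := hH.lip_lower t (x + b) (x + a) ht
    have h2 := hH.lip_upper t (x + b) (x + a) ht
    have h3 : h t (x + a) ≤ h t (x + b) := (hH.strict_mono t ht).monotone (by linarith)
    have h4 : x + b - (x + a) = b - a := by ring
    rw [h4, abs_of_nonneg (sub_nonneg.2 hab), abs_of_nonneg (sub_nonneg.2 h3)] at h1 h2
    exact ⟨h1, h2⟩
  have hlow : ∀ a b : ℝ, a ≤ b → ch * (b - a) ≤ F b - F a := by
    intro a b hab
    rw [hsub]
    have := integral_mono (integrable_const (ch * (b - a))) ((hint b).sub (hint a))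
      (fun ω => (hpt a b (Z ω - m) hab).1)
    simpa using this
  have hup : ∀ a b : ℝ, a ≤ b → F b - F a ≤ Ch * (b - a) := by
    intro a b hab
    rw [hsub]
    have := integral_mono ((hint b).sub (hint a)) (integrable_const (Ch * (b - a)))
      (fun ω => (hpt a b (Z ω - m) hab).2)
    simpa using this
  have hmono : StrictMono F := by
    intro a b hab
    have h1 := hlow a b hab.le
    have h2 := mul_pos hH.ch_pos (sub_pos.2 hab)
    linarith
  have hcont : Continuous F := by
    refine (LipschitzWith.of_le_add_mul (Real.toNNReal Ch) ?_).continuous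
    intro a b
    rw [Real.coe_toNNReal _ hH.Ch_pos.le, Real.dist_eq]
    rcases le_total a b with hab | hab
    · have h1 := hmono.monotone hab
      have h2 := mul_nonneg hH.Ch_pos.le (abs_nonneg (a - b))
      linarith
    · have h1 := hup b a hab
      rw [abs_of_nonneg (sub_nonneg.2 hab)]
      linarith
  have hsurj : Function.Surjective F := by
    intro w
    set r : ℝ := |w - F 0| / ch with hr
    have hr0 : 0 ≤ r := div_nonneg (abs_nonneg _) hH.ch_pos.le
    have hrc : ch * r = |w - F 0| := mul_div_cancel₀ _ hH.ch_pos.ne'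
    have h1 := hlow 0 r hr0
    have h2 := hlow (-r) 0 (by linarith)
    have h3 := le_abs_self (w - F 0)
    have h4 := neg_abs_le (w - F 0)
    exact mem_range_of_exists_le_of_exists_ge hcont ⟨-r, by linarith⟩ ⟨r, by linarith⟩
  have hbij : Function.Bijective F := ⟨hmono.injective, hsurj⟩
  exact ⟨fun w => hbij.existsUnique w, hmono, hcont, hbij⟩
end
end

section
/- If z̄ : [0,∞) → ℝ is a càdlàg function, then the function t ↦ z_t := E[h(t, Y_t − E[Y_t] + z̄_t)] is càdlàg on [0,∞). -/
open MeasureTheory Filter Set Function Topology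

noncomputable section

lemma aux_seq {Ω : Type*} [MeasurableSpace Ω] (μ : Measure Ω) [IsProbabilityMeasure μ]
    (h : ℝ → ℝ → ℝ) (Mh Lh ch Ch : ℝ) (hH : CondH h Mh Lh ch Ch)
    (Y : ℝ → Ω → ℝ) (hY : NiceProcess μ Y) (zb : ℝ → ℝ)
    (q t : ℝ) (hq : 0 ≤ q) (ht : 0 ≤ t) (x : ℕ → ℝ) (hx : ∀ n, x n ∈ Set.Icc 0 q)
    (hxt : Tendsto x atTop (𝓝 t)) (Z : Ω → ℝ)
    (hZ : ∀ ω, Tendsto (fun n => Y (x n) ω) atTop (𝓝 (Z ω))) (c : ℝ)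
    (hc : Tendsto (fun n => zb (x n)) atTop (𝓝 c)) :
    Tendsto (fun n => ∫ ω, h (x n) (Y (x n) ω - (∫ ω', Y (x n) ω' ∂μ) + zb (x n)) ∂μ) atTop
      (𝓝 (∫ ω, h t (Z ω - (∫ ω', Z ω' ∂μ) + c) ∂μ)) := by
  have hU := hY.unifInt q hq
  have hUI : UniformIntegrable (fun n => Y (x n)) 1 μ := by
    refine ⟨fun n => hU.1 ⟨x n, hx n⟩, fun ε hε => ?_, ?_⟩
    · obtain ⟨δ, hδ, H⟩ := hU.2.1 hε
      exact ⟨δ, hδ, fun n => H ⟨x n, hx n⟩⟩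
    · obtain ⟨C, hC⟩ := hU.2.2
      exact ⟨C, fun n => hC ⟨x n, hx n⟩⟩
  have hae : ∀ᵐ ω ∂μ, Tendsto (fun n => Y (x n) ω) atTop (𝓝 (Z ω)) := Eventually.of_forall hZ
  have hZi : Integrable Z μ := hUI.integrable_of_ae_tendsto hae
  have hYi : ∀ n, Integrable (Y (x n)) μ := fun n => hY.integrable _ (hx n).1
  have hL := tendsto_Lp_finite_of_tendsto_ae le_rfl (by simp) hUI.1
    (memLp_one_iff_integrable.2 hZi) hUI.2.1 hae
  have hD : Tendsto (fun n => ∫ ω, |Y (x n) ω - Z ω| ∂μ) atTop (𝓝 0) := by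
    have := (ENNReal.tendsto_toReal ENNReal.zero_ne_top).comp hL
    simp only [ENNReal.toReal_zero] at this
    refine this.congr fun n => ?_
    simp only [Function.comp, eLpNorm_one_eq_lintegral_enorm]
    rw [← integral_norm_eq_lintegral_enorm ((hYi n).sub hZi).1]
    rfl
  have hint : ∀ s, 0 ≤ s → ∀ W : Ω → ℝ, Integrable W μ → Integrable (fun ω => h s (W ω)) μ := by
    intro s hs W hW
    refine Integrable.mono' (g := fun ω => Mh * (1 + |W ω|))
      (((integrable_const 1).add hW.abs).const_mul Mh) ?_ ?_
    · have hm : Measurable (h s) := hH.meas.comp measurable_prodMk_left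
      exact (hm.comp_aemeasurable hW.1.aemeasurable).aestronglyMeasurable
    · exact Eventually.of_forall fun ω => hH.growth s _ hs
  rw [tendsto_iff_dist_tendsto_zero]
  have hB : Tendsto (fun n => Lh * |x n - t| + Ch * ((∫ ω, |Y (x n) ω - Z ω| ∂μ) +
      ((∫ ω, |Y (x n) ω - Z ω| ∂μ) + |zb (x n) - c|))) atTop (𝓝 0) := by
    have h1 : Tendsto (fun n => |x n - t|) atTop (𝓝 0) := by
      simpa using (hxt.sub_const t).abs
    have h2 : Tendsto (fun n => |zb (x n) - c|) atTop (𝓝 0) := by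
      simpa using (hc.sub_const c).abs
    simpa using (h1.const_mul Lh).add ((hD.add (hD.add h2)).const_mul Ch)
  refine squeeze_zero (fun _ => dist_nonneg) (fun n => ?_) hB
  have hXi : Integrable (fun ω => Y (x n) ω - (∫ ω', Y (x n) ω' ∂μ) + zb (x n)) μ :=
    ((hYi n).sub (integrable_const _)).add (integrable_const _)
  have hWi : Integrable (fun ω => Z ω - (∫ ω', Z ω' ∂μ) + c) μ :=
    (hZi.sub (integrable_const _)).add (integrable_const _)
  have hdi : Integrable (fun ω => |Y (x n) ω - Z ω|) μ := ((hYi n).sub hZi).abs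
  have hm : |(∫ ω', Y (x n) ω' ∂μ) - ∫ ω', Z ω' ∂μ| ≤ ∫ ω, |Y (x n) ω - Z ω| ∂μ := by
    rw [← integral_sub (hYi n) hZi]
    exact abs_integral_le_integral_abs
  rw [Real.dist_eq, ← integral_sub (hint _ (hx n).1 _ hXi) (hint t ht _ hWi)]
  set D := ∫ ω, |Y (x n) ω - Z ω| ∂μ with hDdef
  have hbi : Integrable (fun ω => Lh * |x n - t| +
      Ch * (|Y (x n) ω - Z ω| + (D + |zb (x n) - c|))) μ :=
    (integrable_const _).add ((hdi.add (integrable_const _)).const_mul _)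
  calc _ ≤ ∫ ω, |h (x n) (Y (x n) ω - (∫ ω', Y (x n) ω' ∂μ) + zb (x n))
          - h t (Z ω - (∫ ω', Z ω' ∂μ) + c)| ∂μ := abs_integral_le_integral_abs
    _ ≤ ∫ ω, (Lh * |x n - t| + Ch * (|Y (x n) ω - Z ω| + (D + |zb (x n) - c|))) ∂μ := by
        refine integral_mono ((hint _ (hx n).1 _ hXi).sub (hint t ht _ hWi)).abs hbi fun ω => ?_
        set a := ∫ ω', Y (x n) ω' ∂μ
        set b := ∫ ω', Z ω' ∂μ
        have e1 := hH.lip_time t (x n) (Z ω - b + c) ht (hx n).1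
        have e2 := hH.lip_upper (x n) (Y (x n) ω - a + zb (x n)) (Z ω - b + c) (hx n).1
        have e3 : |Y (x n) ω - a + zb (x n) - (Z ω - b + c)| ≤
            |Y (x n) ω - Z ω| + (D + |zb (x n) - c|) := by
          have : Y (x n) ω - a + zb (x n) - (Z ω - b + c)
            = (Y (x n) ω - Z ω) + (-(a - b) + (zb (x n) - c)) := by ring
          rw [this]
          have i1 := abs_add_le (Y (x n) ω - Z ω) (-(a - b) + (zb (x n) - c))
          have i2 := abs_add_le (-(a - b)) (zb (x n) - c)
          rw [abs_neg] at i2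
          linarith
        have e4 := mul_le_mul_of_nonneg_left e3 hH.Ch_pos.le
        have e5 := abs_sub_le (h (x n) (Y (x n) ω - a + zb (x n)))
          (h (x n) (Z ω - b + c)) (h t (Z ω - b + c))
        show |_ - _| ≤ _
        linarith
    _ = _ := by
        have hci : Integrable (fun ω => Ch * (|Y (x n) ω - Z ω| + (D + |zb (x n) - c|))) μ :=
          (hdi.add (integrable_const _)).const_mul _
        rw [integral_add (integrable_const _) hci,
          integral_const_mul Ch, integral_add hdi (integrable_const _)]
        simp [hDdef]

lemma aux_filter {Ω : Type*} [MeasurableSpace Ω] (μ : Measure Ω) [IsProbabilityMeasure μ]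
    (h : ℝ → ℝ → ℝ) (Mh Lh ch Ch : ℝ) (hH : CondH h Mh Lh ch Ch)
    (Y : ℝ → Ω → ℝ) (hY : NiceProcess μ Y) (zb : ℝ → ℝ)
    (t : ℝ) (ht : 0 ≤ t) (l : Filter ℝ) [l.IsCountablyGenerated]
    (hl : l ≤ 𝓝 t) (hl0 : ∀ᶠ s in l, 0 ≤ s) (Z : Ω → ℝ)
    (hZ : ∀ ω, Tendsto (fun s => Y s ω) l (𝓝 (Z ω))) (c : ℝ)
    (hc : Tendsto zb l (𝓝 c)) :
    Tendsto (fun s => ∫ ω, h s (Y s ω - (∫ ω', Y s ω' ∂μ) + zb s) ∂μ) l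
      (𝓝 (∫ ω, h t (Z ω - (∫ ω', Z ω' ∂μ) + c) ∂μ)) := by
  refine tendsto_of_seq_tendsto fun x hx => ?_
  have hle : ∀ᶠ s in l, s ≤ t + 1 := hl (Iic_mem_nhds (by linarith))
  obtain ⟨N, hN⟩ := eventually_atTop.1 (hx.eventually (hl0.and hle))
  have hx' : Tendsto (fun n => x (n + N)) atTop l := hx.comp (tendsto_add_atTop_nat N)
  rw [← tendsto_add_atTop_iff_nat N]
  exact aux_seq μ h Mh Lh ch Ch hH Y hY zb (t + 1) t (by linarith) ht (fun n => x (n + N))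
    (fun n => hN _ (Nat.le_add_left _ _)) (hx'.mono_right hl) Z (fun ω => (hZ ω).comp hx') c
    (hc.comp hx')

/-- if `z̄` is càdlàg then `t ↦ E[h(t, Y_t - E Y_t + z̄_t)]` is càdlàg. -/
theorem stmt_2 {Ω : Type*} [MeasurableSpace Ω] (μ : Measure Ω) [IsProbabilityMeasure μ]
    (h : ℝ → ℝ → ℝ) (Mh Lh ch Ch : ℝ) (hH : CondH h Mh Lh ch Ch)
    (Y : ℝ → Ω → ℝ) (hY : NiceProcess μ Y)
    (zb : ℝ → ℝ) (hzb : CadlagOn zb) :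
    CadlagOn fun t => ∫ ω, h t (Y t ω - (∫ ω', Y t ω' ∂μ) + zb t) ∂μ := by
  refine ⟨fun t ht => ?_, fun t ht => ?_⟩
  · exact aux_filter μ h Mh Lh ch Ch hH Y hY zb t ht (𝓝[Set.Ici t] t) nhdsWithin_le_nhds
      (eventually_of_mem self_mem_nhdsWithin fun s hs => le_trans ht hs) (Y t)
      (fun ω => (hY.cadlag ω).1 t ht) (zb t) (hzb.1 t ht)
  · choose Z hZ using fun ω => (hY.cadlag ω).2 t ht
    obtain ⟨c, hc⟩ := hzb.2 t ht
    refine ⟨_, aux_filter μ h Mh Lh ch Ch hH Y hY zb t ht.le (𝓝[Set.Iio t] t) nhdsWithin_le_nhds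
      (nhdsWithin_le_nhds (Ici_mem_nhds ht)) Z hZ c hc⟩
end
end

section
/- If z : [0,∞) → ℝ is a càdlàg function and z̄ : [0,∞) → ℝ is a function satisfying E[h(t, Y_t − E[Y_t] + z̄_t)] = z_t for every t ≥ 0, then z̄ is càdlàg on [0,∞). -/
open MeasureTheory Filter Set Function Topology

noncomputable section

lemma CondH.integrable_comp {Ω : Type*} [MeasurableSpace Ω] {μ : Measure Ω}
    [IsProbabilityMeasure μ] {h : ℝ → ℝ → ℝ} {Mh Lh ch Ch : ℝ} (hH : CondH h Mh Lh ch Ch)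
    {t : ℝ} (ht : 0 ≤ t) {X : Ω → ℝ} (hX : Integrable X μ) :
    Integrable (fun ω => h t (X ω)) μ := by
  have hm : Measurable (h t) := hH.meas.comp (measurable_const.prodMk measurable_id)
  refine Integrable.mono' (g := fun ω => Mh * (1 + |X ω|)) ?_ ?_ ?_
  · exact ((integrable_const 1).add hX.abs).const_mul Mh
  · exact (hm.comp_aemeasurable hX.aemeasurable).aestronglyMeasurable
  · exact Eventually.of_forall fun ω => by simpa using hH.growth t (X ω) ht

lemma CondH.mean_lower {Ω : Type*} [MeasurableSpace Ω] {μ : Measure Ω}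
    [IsProbabilityMeasure μ] {h : ℝ → ℝ → ℝ} {Mh Lh ch Ch : ℝ} (hH : CondH h Mh Lh ch Ch)
    {t : ℝ} (ht : 0 ≤ t) {X : Ω → ℝ} (hX : Integrable X μ) {u v : ℝ} (huv : u ≤ v) :
    ch * (v - u) ≤ ∫ ω, h t (X ω + v) ∂μ - ∫ ω, h t (X ω + u) ∂μ := by
  have h1 : Integrable (fun ω => h t (X ω + v)) μ :=
    hH.integrable_comp ht (hX.add (integrable_const v))
  have h2 : Integrable (fun ω => h t (X ω + u)) μ :=
    hH.integrable_comp ht (hX.add (integrable_const u))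
  rw [← integral_sub h1 h2]
  have : ∫ _ : Ω, ch * (v - u) ∂μ = ch * (v - u) := by simp
  rw [← this]
  refine integral_mono (integrable_const _) (h1.sub h2) fun ω => ?_
  have h3 := hH.lip_lower t (X ω + v) (X ω + u) ht
  have h4 : h t (X ω + u) ≤ h t (X ω + v) := (hH.strict_mono t ht).monotone (by linarith)
  rw [abs_of_nonneg (by linarith), abs_of_nonneg (by linarith)] at h3
  have h5 : X ω + v - (X ω + u) = v - u := by ring
  rw [h5] at h3
  exact h3

lemma CondH.mean_lower_abs {Ω : Type*} [MeasurableSpace Ω] {μ : Measure Ω}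
    [IsProbabilityMeasure μ] {h : ℝ → ℝ → ℝ} {Mh Lh ch Ch : ℝ} (hH : CondH h Mh Lh ch Ch)
    {t : ℝ} (ht : 0 ≤ t) {X : Ω → ℝ} (hX : Integrable X μ) (u v : ℝ) :
    ch * |v - u| ≤ |∫ ω, h t (X ω + v) ∂μ - ∫ ω, h t (X ω + u) ∂μ| := by
  rcases le_total u v with huv | huv
  · rw [abs_of_nonneg (by linarith : 0 ≤ v - u)]
    exact (hH.mean_lower ht hX huv).trans (le_abs_self _)
  · rw [abs_sub_comm, abs_of_nonneg (by linarith : 0 ≤ u - v), abs_sub_comm]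
    exact (hH.mean_lower ht hX huv).trans (le_abs_self _)

lemma CondH.mean_upper {Ω : Type*} [MeasurableSpace Ω] {μ : Measure Ω}
    [IsProbabilityMeasure μ] {h : ℝ → ℝ → ℝ} {Mh Lh ch Ch : ℝ} (hH : CondH h Mh Lh ch Ch)
    {s t : ℝ} (hs : 0 ≤ s) (ht : 0 ≤ t) {X X' : Ω → ℝ} (hX : Integrable X μ)
    (hX' : Integrable X' μ) :
    |∫ ω, h s (X ω) ∂μ - ∫ ω, h t (X' ω) ∂μ| ≤
      Lh * |s - t| + Ch * ∫ ω, |X ω - X' ω| ∂μ := by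
  have h1 := hH.integrable_comp hs hX
  have h2 := hH.integrable_comp ht hX'
  rw [← integral_sub h1 h2]
  have hd : Integrable (fun ω => |X ω - X' ω|) μ := (hX.sub hX').abs
  have : ∫ ω, (Lh * |s - t| + Ch * |X ω - X' ω|) ∂μ
      = Lh * |s - t| + Ch * ∫ ω, |X ω - X' ω| ∂μ := by
    rw [integral_add (integrable_const _) (hd.const_mul _),
      integral_const_mul Ch (fun ω => |X ω - X' ω|)]
    simp
  rw [← this]
  refine (abs_integral_le_integral_abs).trans ?_
  refine integral_mono (h1.sub h2).abs ((integrable_const _).add (hd.const_mul _)) fun ω => ?_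
  have h3 := hH.lip_time t s (X ω) ht hs
  have h4 := hH.lip_upper t (X ω) (X' ω) ht
  have h5 := abs_sub_le (h s (X ω)) (h t (X ω)) (h t (X' ω))
  simp only
  linarith

lemma tendsto_L1_aux {Ω : Type*} [MeasurableSpace Ω] (μ : Measure Ω) [IsProbabilityMeasure μ]
    (Y : ℝ → Ω → ℝ) (hY : NiceProcess μ Y) (t : ℝ) (F : Filter ℝ)
    (hF : F ≤ 𝓝 t) (hF0 : ∀ᶠ s in F, 0 ≤ s) (Yl : Ω → ℝ)
    (hYl : ∀ ω, Tendsto (fun s => Y s ω) F (𝓝 (Yl ω))) (ht : 0 ≤ t)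
    (u : ℕ → ℝ) (hu : Tendsto u atTop F) :
    MemLp Yl 1 μ ∧ Tendsto (fun n => eLpNorm (Y (u n) - Yl) 1 μ) atTop (𝓝 0) := by
  have hq : (0:ℝ) ≤ t + 1 := by linarith
  let c : ℕ → Set.Icc (0:ℝ) (t + 1) := fun n => Set.projIcc 0 (t + 1) hq (u n)
  have hc : ∀ᶠ n in atTop, (c n : ℝ) = u n := by
    have h1 : ∀ᶠ s in F, s ≤ t + 1 :=
      hF (Iic_mem_nhds (by linarith))
    filter_upwards [hu.eventually hF0, hu.eventually h1] with n h0 h1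
    simp only [c]
    rw [Set.projIcc_of_mem hq ⟨h0, h1⟩]
  have hUI := hY.unifInt (t + 1) hq
  have hUI' : UniformIntegrable (fun n => Y (c n).1) 1 μ := by
    refine ⟨fun n => hUI.1 (c n), fun ε hε => ?_, ?_⟩
    · obtain ⟨δ, hδ, H⟩ := hUI.2.1 hε
      exact ⟨δ, hδ, fun n => H (c n)⟩
    · obtain ⟨C, hC⟩ := hUI.2.2
      exact ⟨C, fun n => hC (c n)⟩
  have hlim : ∀ᵐ ω ∂μ, Tendsto (fun n => Y (c n).1 ω) atTop (𝓝 (Yl ω)) :=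
    Eventually.of_forall fun ω =>
      ((hYl ω).comp hu).congr' (hc.mono fun n hn => by simp [hn])
  have hmem : MemLp Yl 1 μ := hUI'.memLp_of_ae_tendsto hlim
  refine ⟨hmem, ?_⟩
  exact (tendsto_Lp_finite_of_tendsto_ae le_rfl ENNReal.one_ne_top hUI'.1 hmem hUI'.2.1
    hlim).congr' (hc.mono fun n hn => by simp only [hn])

lemma zb_tendsto_aux {Ω : Type*} [MeasurableSpace Ω] (μ : Measure Ω) [IsProbabilityMeasure μ]
    (h : ℝ → ℝ → ℝ) (Mh Lh ch Ch : ℝ) (hH : CondH h Mh Lh ch Ch)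
    (Y : ℝ → Ω → ℝ) (hY : NiceProcess μ Y)
    (z zb : ℝ → ℝ)
    (heq : ∀ t : ℝ, 0 ≤ t → (∫ ω, h t (Y t ω - (∫ ω', Y t ω' ∂μ) + zb t) ∂μ) = z t)
    (t : ℝ) (ht : 0 ≤ t) (F : Filter ℝ) [F.NeBot] [F.IsCountablyGenerated]
    (hF : F ≤ 𝓝 t) (hF0 : ∀ᶠ s in F, 0 ≤ s) (Yl : Ω → ℝ)
    (hYl : ∀ ω, Tendsto (fun s => Y s ω) F (𝓝 (Yl ω))) (zl : ℝ)
    (hzl : Tendsto z F (𝓝 zl)) :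
    ∃ L, Tendsto zb F (𝓝 L) := by
  obtain ⟨u, hu⟩ := exists_seq_tendsto F
  have hmem : MemLp Yl 1 μ := (tendsto_L1_aux μ Y hY t F hF hF0 Yl hYl ht u hu).1
  have hYlint : Integrable Yl μ := memLp_one_iff_integrable.1 hmem
  have hg0 : Tendsto (fun s => eLpNorm (Y s - Yl) 1 μ) F (𝓝 0) :=
    tendsto_of_seq_tendsto fun u hu => (tendsto_L1_aux μ Y hY t F hF hF0 Yl hYl ht u hu).2
  have hg : Tendsto (fun s => ∫ ω, |Y s ω - Yl ω| ∂μ) F (𝓝 0) := by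
    have h1 := (ENNReal.tendsto_toReal ENNReal.zero_ne_top).comp hg0
    simp only [ENNReal.toReal_zero] at h1
    refine h1.congr' ?_
    filter_upwards [hF0] with s hs
    have := integral_norm_eq_lintegral_enorm ((hY.integrable s hs).sub hYlint).1
    simp only [Pi.sub_apply, Real.norm_eq_abs] at this
    rw [this]
    simp [eLpNorm_one_eq_lintegral_enorm]
  set g : ℝ → ℝ := fun s => ∫ ω, |Y s ω - Yl ω| ∂μ with hgdef
  -- the key estimate
  have key : ∀ s r : ℝ, 0 ≤ s → 0 ≤ r →
      |zb s - zb r| ≤ (|z s - z r| + (Lh * |s - r| + Ch * (2 * (g s + g r)))) / ch := by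
    intro s r hs hr
    have is := hY.integrable s hs
    have ir := hY.integrable r hr
    have hXs : Integrable (fun ω => Y s ω - ∫ ω', Y s ω' ∂μ) μ := is.sub (integrable_const _)
    have hXr : Integrable (fun ω => Y r ω - ∫ ω', Y r ω' ∂μ) μ := ir.sub (integrable_const _)
    have k1 := hH.mean_lower_abs hr hXr (zb r) (zb s)
    rw [heq r hr] at k1
    have k2 := hH.mean_upper hs hr (hXs.add (integrable_const (zb s)))
      (hXr.add (integrable_const (zb s)))
    simp only [Pi.add_apply] at k2
    rw [heq s hs] at k2
    have isl : Integrable (fun ω => |Y s ω - Yl ω|) μ := (is.sub hYlint).abs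
    have irl : Integrable (fun ω => |Y r ω - Yl ω|) μ := (ir.sub hYlint).abs
    have isr : Integrable (fun ω => |Y s ω - Y r ω|) μ := (is.sub ir).abs
    have e1 : ∫ ω, |Y s ω - Y r ω| ∂μ ≤ g s + g r := by
      rw [hgdef]
      simp only
      rw [← integral_add isl irl]
      refine integral_mono isr (isl.add irl) fun ω => ?_
      have := abs_sub_le (Y s ω) (Yl ω) (Y r ω)
      rw [abs_sub_comm (Yl ω)] at this
      exact this
    have e2 : |(∫ ω', Y s ω' ∂μ) - ∫ ω', Y r ω' ∂μ| ≤ ∫ ω, |Y s ω - Y r ω| ∂μ := by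
      rw [← integral_sub is ir]
      exact abs_integral_le_integral_abs
    have e3 : ∫ ω, |Y s ω - (∫ ω', Y s ω' ∂μ) + zb s - (Y r ω - (∫ ω', Y r ω' ∂μ) + zb s)| ∂μ
        ≤ ∫ ω, |Y s ω - Y r ω| ∂μ + |(∫ ω', Y s ω' ∂μ) - ∫ ω', Y r ω' ∂μ| := by
      have : ∫ ω, (|Y s ω - Y r ω| + |(∫ ω', Y s ω' ∂μ) - ∫ ω', Y r ω' ∂μ|) ∂μ
          = ∫ ω, |Y s ω - Y r ω| ∂μ + |(∫ ω', Y s ω' ∂μ) - ∫ ω', Y r ω' ∂μ| := by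
        rw [integral_add isr (integrable_const _)]
        simp
      rw [← this]
      refine integral_mono ((hXs.add (integrable_const (zb s))).sub
        (hXr.add (integrable_const (zb s)))).abs (isr.add (integrable_const _)) fun ω => ?_
      have e4 : Y s ω - (∫ ω', Y s ω' ∂μ) + zb s - (Y r ω - (∫ ω', Y r ω' ∂μ) + zb s)
        = (Y s ω - Y r ω) - ((∫ ω', Y s ω' ∂μ) - ∫ ω', Y r ω' ∂μ) := by ring
      simp only [Pi.add_apply, Pi.sub_apply, e4]
      exact abs_sub _ _
    have e5 := mul_le_mul_of_nonneg_left
      (e3.trans (show _ ≤ 2 * (g s + g r) by linarith)) hH.Ch_pos.le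
    rw [le_div_iff₀ hH.ch_pos]
    have e6 := abs_sub_le (∫ ω, h r (Y r ω - (∫ ω', Y r ω' ∂μ) + zb s) ∂μ) (z s) (z r)
    rw [abs_sub_comm _ (z s)] at e6
    linarith
  have hC : Cauchy (F.map zb) := by
    rw [cauchy_map_iff', tendsto_uniformity_iff_dist_tendsto_zero]
    have hid : Tendsto (fun s : ℝ => s) F (𝓝 t) := hF
    have hb : Tendsto (fun p : ℝ × ℝ => (|z p.1 - z p.2| +
        (Lh * |p.1 - p.2| + Ch * (2 * (g p.1 + g p.2)))) / ch) (F ×ˢ F) (𝓝 0) := by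
      have := (((hzl.comp tendsto_fst).sub (hzl.comp tendsto_snd)).abs.add
        ((((hid.comp tendsto_fst).sub (hid.comp tendsto_snd)).abs.const_mul Lh).add
        ((((hg.comp tendsto_fst).add (hg.comp tendsto_snd)).const_mul 2).const_mul Ch))).div_const ch
      simpa using this
    refine squeeze_zero' (Eventually.of_forall fun p => dist_nonneg) ?_ hb
    filter_upwards [hF0.prod_mk hF0] with p hp
    rw [Real.dist_eq]
    exact key p.1 p.2 hp.1 hp.2
  exact CompleteSpace.complete hC

/-- if `z` is càdlàg and `E[h(t, Y_t - E Y_t + z̄_t)] = z_t` for all `t ≥ 0`,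
then `z̄` is càdlàg. -/
theorem stmt_3 {Ω : Type*} [MeasurableSpace Ω] (μ : Measure Ω) [IsProbabilityMeasure μ]
    (h : ℝ → ℝ → ℝ) (Mh Lh ch Ch : ℝ) (hH : CondH h Mh Lh ch Ch)
    (Y : ℝ → Ω → ℝ) (hY : NiceProcess μ Y)
    (z zb : ℝ → ℝ) (hz : CadlagOn z)
    (heq : ∀ t : ℝ, 0 ≤ t → (∫ ω, h t (Y t ω - (∫ ω', Y t ω' ∂μ) + zb t) ∂μ) = z t) :
    CadlagOn zb := by
  refine ⟨fun t ht => ?_, fun t ht => ?_⟩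
  · have h0 : ∀ᶠ s in 𝓝[Set.Ici t] t, 0 ≤ s := by
      filter_upwards [self_mem_nhdsWithin] with s hs
      exact ht.trans hs
    obtain ⟨L, hL⟩ := zb_tendsto_aux μ h Mh Lh ch Ch hH Y hY z zb heq t ht (𝓝[Set.Ici t] t)
      nhdsWithin_le_nhds h0 (Y t) (fun ω => (hY.cadlag ω).1 t ht) (z t) (hz.1 t ht)
    have hp : Tendsto zb (pure t) (𝓝 L) :=
      hL.mono_left (pure_le_nhdsWithin Set.self_mem_Ici)
    have : zb t = L := tendsto_nhds_unique (tendsto_pure_nhds zb t) hp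
    rw [ContinuousWithinAt, this]
    exact hL
  · choose Yl hYl using fun ω => (hY.cadlag ω).2 t ht
    obtain ⟨zl, hzl⟩ := hz.2 t ht
    have h0 : ∀ᶠ s in 𝓝[Set.Iio t] t, 0 ≤ s :=
      nhdsWithin_le_nhds (Ici_mem_nhds ht)
    exact zb_tendsto_aux μ h Mh Lh ch Ch hH Y hY z zb heq t ht.le (𝓝[Set.Iio t] t)
      nhdsWithin_le_nhds h0 Yl hYl zl hzl
end
end

section
/- There exists a solution (X, k) of the Skorokhod problem with mean minimality condition and two constraints associated with (h, Y, l, u). -/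
open MeasureTheory Filter Set Function Topology

noncomputable section

/-- Lower flow property. -/
def FlowLow (k b : ℝ → ℝ) : Prop :=
  ∀ s t c : ℝ, 0 ≤ s → s ≤ t → c ≤ k s → (∀ r, s < r → r ≤ t → c ≤ b r) → c ≤ k t

theorem CadlagOn.neg_fun {f : ℝ → ℝ} (hf : CadlagOn f) : CadlagOn (fun t => - f t) :=
  ⟨fun t ht => (hf.1 t ht).neg, fun t ht => by
    obtain ⟨L, hL⟩ := hf.2 t ht
    exact ⟨-L, hL.neg⟩⟩

theorem flow_jump {k b : ℝ → ℝ} (hkb : ∀ t, 0 ≤ t → k t ≤ b t) (F : FlowLow k b)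
    (hb : CadlagOn b) {t K : ℝ} (ht : 0 < t) (hK : Tendsto k (𝓝[<] t) (𝓝 K))
    (hlt : k t < b t) : K ≤ k t := by
  obtain ⟨B, hB⟩ := hb.2 t ht
  have hpos : ∀ᶠ s in 𝓝[<] t, 0 < s := nhdsWithin_le_nhds (lt_mem_nhds ht)
  have hKB : K ≤ B := le_of_tendsto_of_tendsto hK hB (hpos.mono fun s hs => hkb s hs.le)
  by_contra hcon
  push Not at hcon
  obtain ⟨c, hc1, hc2⟩ := exists_between (lt_min hcon hlt)
  have hcK : c < K := hc2.trans_le (min_le_left _ _)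
  have hcb : c < b t := hc2.trans_le (min_le_right _ _)
  have e1 : ∀ᶠ s in 𝓝[<] t, c < k s := hK (lt_mem_nhds hcK)
  have e2 : ∀ᶠ s in 𝓝[<] t, c < b s := hB (lt_mem_nhds (hcK.trans_le hKB))
  obtain ⟨v, hv, hsub⟩ := mem_nhdsLT_iff_exists_Ioo_subset.1 ((e1.and e2).and hpos)
  obtain ⟨s, hs1, hs2⟩ := exists_between (show v < t from hv)
  have hs := hsub ⟨hs1, hs2⟩
  have := F s t c hs.2.le hs2.le hs.1.1.le (fun r hr1 hr2 => by
    rcases hr2.lt_or_eq with h | h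
    · exact (hsub ⟨hs1.trans hr1, h⟩).1.2.le
    · rw [h]; exact hcb.le)
  linarith

theorem flow_mono_aux {k b : ℝ → ℝ} (hkb : ∀ t, 0 ≤ t → k t ≤ b t) (F : FlowLow k b)
    (hb : CadlagOn b) (hk : CadlagOn k) {t q : ℝ} (ht : 0 ≤ t) (htq : t ≤ q)
    (hlt : ∀ s, t ≤ s → s ≤ q → k s < b s) : k t ≤ k q := by
  set S : Set ℝ := {s | (t ≤ s ∧ s ≤ q) ∧ ∀ r, t ≤ r → r ≤ s → k t ≤ k r} with hS
  have htS : t ∈ S := ⟨⟨le_rfl, htq⟩, fun r h1 h2 => by rw [le_antisymm h2 h1]⟩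
  have hbdd : BddAbove S := ⟨q, fun s hs => hs.1.2⟩
  set σ := sSup S with hσ
  have htσ : t ≤ σ := le_csSup hbdd htS
  have hσq : σ ≤ q := csSup_le ⟨t, htS⟩ fun s hs => hs.1.2
  have hbelow : ∀ r, t ≤ r → r < σ → k t ≤ k r := by
    intro r h1 h2
    obtain ⟨s, hs, hrs⟩ := exists_lt_of_lt_csSup ⟨t, htS⟩ h2
    exact hs.2 r h1 hrs.le
  have hat : k t ≤ k σ := by
    rcases htσ.lt_or_eq with h | h
    · have hσ0 : 0 < σ := ht.trans_lt h
      obtain ⟨K, hK⟩ := hk.2 σ hσ0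
      have h1 := flow_jump hkb F hb hσ0 hK (hlt σ htσ hσq)
      have h2 : k t ≤ K := ge_of_tendsto hK (by
        filter_upwards [Ioo_mem_nhdsLT h] with r hr using hbelow r hr.1.le hr.2)
      exact h2.trans h1
    · rw [← h]
  have hupto : ∀ r, t ≤ r → r ≤ σ → k t ≤ k r := by
    intro r h1 h2
    rcases h2.lt_or_eq with h | h
    · exact hbelow r h1 h
    · rwa [h]
  rcases hσq.lt_or_eq with h | h
  · exfalso
    have e : ∀ᶠ r in 𝓝[≥] σ, k σ < b r :=
      (hb.1 σ (ht.trans htσ)) (lt_mem_nhds (hlt σ htσ hσq))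
    obtain ⟨v, hv, hsub⟩ := mem_nhdsGE_iff_exists_Ico_subset.1 e
    obtain ⟨s, hs1, hs2⟩ := exists_between (lt_min (show σ < v from hv) h)
    have hsS : s ∈ S := by
      refine ⟨⟨htσ.trans hs1.le, (hs2.trans_le (min_le_right _ _)).le⟩, fun r h1 h2 => ?_⟩
      rcases le_or_gt r σ with h3 | h3
      · exact hupto r h1 h3
      · refine hat.trans (F σ r _ (ht.trans htσ) h3.le le_rfl fun r' hr1 hr2 => ?_)
        exact (hsub ⟨hr1.le, (hr2.trans h2).trans_lt (hs2.trans_le (min_le_left _ _))⟩ :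
          k σ < b r').le
    exact absurd (le_csSup hbdd hsS) (not_le.2 hs1)
  · rwa [← h]

theorem flow_mono {k b : ℝ → ℝ} (hkb : ∀ t, 0 ≤ t → k t ≤ b t) (F : FlowLow k b)
    (hb : CadlagOn b) (hk : CadlagOn k) {t q : ℝ} (ht : 0 ≤ t) (htq : t ≤ q)
    (hlt : ∀ s, t < s → s ≤ q → k s < b s) : k t ≤ k q := by
  rcases htq.lt_or_eq with h | h
  · have hc : Tendsto k (𝓝[>] t) (𝓝 (k t)) :=
      (hk.1 t ht).mono_left (nhdsWithin_mono t Ioi_subset_Ici_self)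
    refine le_of_tendsto hc ?_
    filter_upwards [Ioo_mem_nhdsGT h] with s hs
    exact flow_mono_aux hkb F hb hk (ht.trans hs.1.le) hs.2.le
      fun r h1 h2 => hlt r (hs.1.trans_le h1) h2
  · rw [h]

theorem flow_osc {k a b : ℝ → ℝ} (hkb : ∀ t, 0 ≤ t → k t ≤ b t) (hak : ∀ t, 0 ≤ t → a t ≤ k t)
    (F : FlowLow k b) (G : FlowLow (fun t => - k t) (fun t => - a t)) {s t ε : ℝ}
    (hs : 0 ≤ s) (hst : s ≤ t) (hε : 0 ≤ ε)
    (hosc : ∀ r, s < r → r ≤ t → |a r - a s| ≤ ε ∧ |b r - b s| ≤ ε) : |k t - k s| ≤ ε := by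
  rw [abs_le]
  constructor
  · have := F s t (k s - ε) hs hst (by linarith) fun r h1 h2 => by
      have := (abs_le.1 (hosc r h1 h2).2).1
      linarith [hkb s hs]
    linarith
  · have := G s t (-(k s) - ε) hs hst (by linarith) fun r h1 h2 => by
      have := (abs_le.1 (hosc r h1 h2).1).2
      linarith [hak s hs]
    linarith

theorem flow_cadlag {k a b : ℝ → ℝ} (hkb : ∀ t, 0 ≤ t → k t ≤ b t)
    (hak : ∀ t, 0 ≤ t → a t ≤ k t)
    (F : FlowLow k b) (G : FlowLow (fun t => - k t) (fun t => - a t))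
    (ha : CadlagOn a) (hb : CadlagOn b) : CadlagOn k := by
  constructor
  · intro t ht
    rw [ContinuousWithinAt, Metric.tendsto_nhds]
    intro ε hε
    have e1 := Metric.tendsto_nhds.1 (ha.1 t ht) (ε / 2) (half_pos hε)
    have e2 := Metric.tendsto_nhds.1 (hb.1 t ht) (ε / 2) (half_pos hε)
    obtain ⟨v, hv, hsub⟩ := mem_nhdsGE_iff_exists_Ico_subset.1 (e1.and e2)
    filter_upwards [Ico_mem_nhdsGE (show t < v from hv)] with s hs
    rw [Real.dist_eq]
    refine (flow_osc hkb hak F G ht hs.1 (half_pos hε).le fun r h1 h2 => ?_).trans_lt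
      (half_lt_self hε)
    have := hsub ⟨h1.le, h2.trans_lt hs.2⟩
    exact ⟨this.1.le, this.2.le⟩
  · intro t ht
    obtain ⟨A, hA⟩ := ha.2 t ht
    obtain ⟨B, hB⟩ := hb.2 t ht
    refine cauchy_map_iff_exists_tendsto.1 (Metric.cauchy_iff.2 ⟨inferInstance, fun ε hε => ?_⟩)
    have e1 := Metric.tendsto_nhds.1 hA (ε / 4) (by positivity)
    have e2 := Metric.tendsto_nhds.1 hB (ε / 4) (by positivity)
    have hpos : ∀ᶠ s in 𝓝[<] t, 0 < s := nhdsWithin_le_nhds (lt_mem_nhds ht)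
    obtain ⟨v, hv, hsub⟩ := mem_nhdsLT_iff_exists_Ioo_subset.1 ((e1.and e2).and hpos)
    have key : ∀ x ∈ Ioo v t, ∀ y ∈ Ioo v t, x ≤ y → |k y - k x| < ε := by
      intro x hx y hy hxy
      refine (flow_osc hkb hak F G (hsub hx).2.le hxy (half_pos hε).le
        fun r h1 h2 => ?_).trans_lt (half_lt_self hε)
      have p := hsub hx
      have q := hsub (show r ∈ Ioo v t from ⟨hx.1.trans h1, h2.trans_lt hy.2⟩)
      simp only [Set.mem_ofPred_eq, Real.dist_eq] at p q
      have p1 := abs_lt.1 p.1.1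
      have p2 := abs_lt.1 p.1.2
      have q1 := abs_lt.1 q.1.1
      have q2 := abs_lt.1 q.1.2
      constructor <;> rw [abs_le] <;> constructor <;> linarith
    refine ⟨Set.image k (Ioo v t), image_mem_map (Ioo_mem_nhdsLT hv), ?_⟩
    rintro _ ⟨x, hx, rfl⟩ _ ⟨y, hy, rfl⟩
    rw [Real.dist_eq]
    rcases le_total x y with h | h
    · rw [abs_sub_comm]; exact key x hx y hy h
    · exact key y hy x hx h

/-- The set whose supremum is the solution of the two-barrier problem. -/
def flowSet (a b : ℝ → ℝ) (t : ℝ) : Set ℝ :=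
  {c | (c ≤ 0 ∧ ∀ r, 0 ≤ r → r ≤ t → c ≤ b r) ∨
    ∃ s, 0 ≤ s ∧ s ≤ t ∧ c ≤ a s ∧ ∀ r, s ≤ r → r ≤ t → c ≤ b r}

theorem exists_flow {a b : ℝ → ℝ} (hab : ∀ t, 0 ≤ t → a t ≤ b t) (ha0 : a 0 ≤ 0) (hb0 : 0 ≤ b 0) :
    ∃ k : ℝ → ℝ, k 0 = 0 ∧ (∀ t, 0 ≤ t → a t ≤ k t) ∧ (∀ t, 0 ≤ t → k t ≤ b t) ∧
      FlowLow k b ∧ FlowLow (fun t => - k t) (fun t => - a t) := by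
  have hub : ∀ t, 0 ≤ t → ∀ c ∈ flowSet a b t, c ≤ b t := by
    rintro t ht c (h | ⟨s, hs0, hst, hc, h⟩)
    · exact h.2 t ht le_rfl
    · exact h t hst le_rfl
  have hbdd : ∀ t, 0 ≤ t → BddAbove (flowSet a b t) := fun t ht => ⟨b t, hub t ht⟩
  have hmem : ∀ t, 0 ≤ t → a t ∈ flowSet a b t := fun t ht =>
    Or.inr ⟨t, ht, le_rfl, le_rfl, fun r h1 h2 => by
      rw [le_antisymm h2 h1]; exact hab t ht⟩
  have hdown : ∀ t c c', c ∈ flowSet a b t → c' ≤ c → c' ∈ flowSet a b t := by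
    rintro t c c' (h | ⟨s, hs0, hst, hc, h⟩) hcc
    · exact Or.inl ⟨hcc.trans h.1, fun r h1 h2 => hcc.trans (h.2 r h1 h2)⟩
    · exact Or.inr ⟨s, hs0, hst, hcc.trans hc, fun r h1 h2 => hcc.trans (h r h1 h2)⟩
  refine ⟨fun t => sSup (flowSet a b t), ?_, ?_, ?_, ?_, ?_⟩
  · apply le_antisymm
    · refine csSup_le ⟨_, hmem 0 le_rfl⟩ ?_
      rintro c (h | ⟨s, hs0, hst, hc, h⟩)
      · exact h.1
      · rw [le_antisymm hst hs0] at hc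
        exact hc.trans ha0
    · exact le_csSup (hbdd 0 le_rfl) (Or.inl ⟨le_rfl, fun r h1 h2 => by
        rw [le_antisymm h2 h1]; exact hb0⟩)
  · exact fun t ht => le_csSup (hbdd t ht) (hmem t ht)
  · exact fun t ht => csSup_le ⟨_, hmem t ht⟩ (hub t ht)
  · intro s t c hs hst hc hcb
    refine le_of_forall_lt fun c' hc' => ?_
    obtain ⟨c'', h1, h2⟩ := exists_between hc'
    refine h1.trans_le (le_csSup (hbdd t (hs.trans hst)) ?_)
    obtain ⟨d, hd, hdc⟩ := exists_lt_of_lt_csSup ⟨_, hmem s hs⟩ (h2.trans_le hc)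
    have hm := hdown s d c'' hd hdc.le
    have ext : ∀ r, r ≤ t → (r ≤ s → c'' ≤ b r) → c'' ≤ b r := by
      intro r hr h
      rcases le_or_gt r s with h' | h'
      · exact h h'
      · exact h2.le.trans (hcb r h' hr)
    rcases hm with h | ⟨s', hs0, hst', hc', h⟩
    · exact Or.inl ⟨h.1, fun r h1 h2 => ext r h2 (h.2 r h1)⟩
    · exact Or.inr ⟨s', hs0, hst'.trans hst, hc', fun r h1 h2 => ext r h2 (h r h1)⟩
  · intro s t c hs hst hc hca
    simp only at hc ⊢
    rw [le_neg] at hc ⊢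
    refine csSup_le ⟨_, hmem t (hs.trans hst)⟩ ?_
    have hold : ∀ d, d ∈ flowSet a b s → d ≤ -c := fun d hd => (le_csSup (hbdd s hs) hd).trans hc
    rintro d (h | ⟨s', hs0, hst', hc', h⟩)
    · exact hold d (Or.inl ⟨h.1, fun r h1 h2 => h.2 r h1 (h2.trans hst)⟩)
    · rcases le_or_gt s' s with h' | h'
      · exact hold d (Or.inr ⟨s', hs0, h', hc', fun r h1 h2 => h r h1 (h2.trans hst)⟩)
      · have := hca s' h' hst'
        linarith

section prob
variable {Ω : Type*} [MeasurableSpace Ω] {μ : Measure Ω} [IsProbabilityMeasure μ]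
  {h : ℝ → ℝ → ℝ} {Mh Lh ch Ch : ℝ} {Y : ℝ → Ω → ℝ}

theorem h_integrable (hH : CondH h Mh Lh ch Ch) {t : ℝ} (ht : 0 ≤ t) {Z : Ω → ℝ}
    (hZ : Integrable Z μ) (z : ℝ) : Integrable (fun ω => h t (Z ω + z)) μ := by
  have hm : Measurable (h t) := hH.meas.comp measurable_prodMk_left
  have hZ' : Integrable (fun ω => Z ω + z) μ := hZ.add (integrable_const z)
  refine Integrable.mono' (g := fun ω => Mh * (1 + |Z ω + z|))
    (((integrable_const 1).add hZ'.abs).const_mul Mh)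
    (hm.comp_aemeasurable hZ'.aemeasurable).aestronglyMeasurable ?_
  exact Eventually.of_forall fun ω => hH.growth t _ ht

theorem H_lower (hH : CondH h Mh Lh ch Ch) {t : ℝ} (ht : 0 ≤ t) {Z : Ω → ℝ}
    (hZ : Integrable Z μ) {x y : ℝ} (hxy : x ≤ y) :
    ch * (y - x) ≤ (∫ ω, h t (Z ω + y) ∂μ) - ∫ ω, h t (Z ω + x) ∂μ := by
  rw [← integral_sub (h_integrable hH ht hZ y) (h_integrable hH ht hZ x)]
  calc ch * (y - x) = ∫ ω, ch * (y - x) ∂μ := by simp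
    _ ≤ _ := by
      refine integral_mono (integrable_const _)
        ((h_integrable hH ht hZ y).sub (h_integrable hH ht hZ x)) fun ω => ?_
      have h1 := hH.lip_lower t (Z ω + y) (Z ω + x) ht
      have h2 : h t (Z ω + x) ≤ h t (Z ω + y) := (hH.strict_mono t ht).monotone (by linarith)
      rw [abs_of_nonneg (by linarith), abs_of_nonneg (by linarith)] at h1
      simp only
      calc ch * (y - x) = ch * (Z ω + y - (Z ω + x)) := by ring
        _ ≤ _ := h1

theorem H_strictMono (hH : CondH h Mh Lh ch Ch) {t : ℝ} (ht : 0 ≤ t) {Z : Ω → ℝ}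
    (hZ : Integrable Z μ) : StrictMono fun z => ∫ ω, h t (Z ω + z) ∂μ := by
  intro x y hxy
  have h1 := H_lower hH ht hZ hxy.le
  have h2 := mul_pos hH.ch_pos (sub_pos.2 hxy)
  simp only
  linarith

/-- comparison of the mean function for two times and two random variables -/
theorem H_diff (hH : CondH h Mh Lh ch Ch) {s t : ℝ} (hs : 0 ≤ s) (ht : 0 ≤ t) {Z W : Ω → ℝ}
    (hZ : Integrable Z μ) (hW : Integrable W μ) (x y : ℝ) :
    |(∫ ω, h s (W ω + x) ∂μ) - ∫ ω, h t (Z ω + y) ∂μ| ≤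
      Lh * |s - t| + Ch * (∫ ω, |W ω - Z ω| ∂μ) + Ch * |x - y| := by
  rw [← integral_sub (h_integrable hH hs hW x) (h_integrable hH ht hZ y)]
  have hi : Integrable (fun ω => |W ω - Z ω|) μ := (hW.sub hZ).abs
  calc |∫ ω, (h s (W ω + x) - h t (Z ω + y)) ∂μ|
      ≤ ∫ ω, |h s (W ω + x) - h t (Z ω + y)| ∂μ := abs_integral_le_integral_abs
    _ ≤ ∫ ω, (Lh * |s - t| + Ch * |W ω - Z ω| + Ch * |x - y|) ∂μ := by
      refine integral_mono
        ((h_integrable hH hs hW x).sub (h_integrable hH ht hZ y)).abs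
        (((integrable_const _).add (hi.const_mul Ch)).add (integrable_const _)) fun ω => ?_
      have h1 := hH.lip_time t s (W ω + x) ht hs
      have h2 := hH.lip_upper t (W ω + x) (Z ω + y) ht
      have h3 : |W ω + x - (Z ω + y)| ≤ |W ω - Z ω| + |x - y| := by
        have : W ω + x - (Z ω + y) = (W ω - Z ω) + (x - y) := by ring
        rw [this]; exact abs_add_le _ _
      have h4 := mul_le_mul_of_nonneg_left h3 hH.Ch_pos.le
      have h5 := abs_sub_le (h s (W ω + x)) (h t (W ω + x)) (h t (Z ω + y))
      simp only
      linarith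
    _ = _ := by
      have hi2 : Integrable (fun ω => Lh * |s - t| + Ch * |W ω - Z ω|) μ :=
        (integrable_const _).add (hi.const_mul Ch)
      rw [integral_add hi2 (integrable_const _),
        integral_add (integrable_const _) (hi.const_mul Ch),
        integral_const_mul Ch (fun ω => |W ω - Z ω|)]
      simp

theorem H_surj (hH : CondH h Mh Lh ch Ch) {t : ℝ} (ht : 0 ≤ t) {Z : Ω → ℝ}
    (hZ : Integrable Z μ) (v : ℝ) : ∃ z, ∫ ω, h t (Z ω + z) ∂μ = v := by
  set f : ℝ → ℝ := fun z => ∫ ω, h t (Z ω + z) ∂μ with hf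
  have hcont : Continuous f := by
    refine (LipschitzWith.of_dist_le_mul (K := ⟨Ch, hH.Ch_pos.le⟩) fun x y => ?_).continuous
    have := H_diff hH ht ht hZ hZ x y
    simp only [sub_self, abs_zero, mul_zero, integral_zero, zero_add] at this
    rw [Real.dist_eq, Real.dist_eq]
    exact this
  have hc := hH.ch_pos
  have h1 : Tendsto f atTop atTop := by
    refine tendsto_atTop_mono' atTop (f₁ := fun z => ch * z + f 0) ?_ ?_
    · filter_upwards [eventually_ge_atTop 0] with z hz
      have := H_lower hH ht hZ hz
      simp only [hf]
      linarith
    · exact tendsto_atTop_add_const_right _ _ (tendsto_id.const_mul_atTop hc)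
  have h2 : Tendsto f atBot atBot := by
    refine tendsto_atBot_mono' atBot (f₁ := fun z => ch * z + f 0) ?_ ?_
    · filter_upwards [eventually_le_atBot 0] with z hz
      have := H_lower hH ht hZ hz
      simp only [hf]
      linarith
    · exact tendsto_atBot_add_const_right _ _ (tendsto_id.const_mul_atBot hc)
  exact hcont.surjective h1 h2 v

theorem L1_limit (hY : NiceProcess μ Y) {t : ℝ} (ht : 0 ≤ t) {F : Filter ℝ} [F.NeBot]
    [F.IsCountablyGenerated] (hF : F ≤ 𝓝 t) (hF0 : ∀ᶠ s in F, 0 ≤ s) {Z : Ω → ℝ}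
    (hZ : ∀ ω, Tendsto (fun s => Y s ω) F (𝓝 (Z ω))) :
    Integrable Z μ ∧ Tendsto (fun s => ∫ ω, |Y s ω - Z ω| ∂μ) F (𝓝 0) := by
  have hUI := hY.unifInt (t + 1) (by linarith)
  have hin : ∀ᶠ s in F, s ∈ Icc (0:ℝ) (t + 1) := by
    filter_upwards [hF0, hF (Iio_mem_nhds (show t < t + 1 by linarith))] with s h1 h2
    exact ⟨h1, le_of_lt h2⟩
  have key : ∀ x : ℕ → ℝ, Tendsto x atTop F → ∃ p : ℕ → Icc (0:ℝ) (t + 1),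
      ∀ᶠ n in atTop, x n = p n := by
    intro x hx
    classical
    refine ⟨fun n => if hn : x n ∈ Icc (0:ℝ) (t + 1) then ⟨x n, hn⟩ else
      ⟨0, le_rfl, by linarith⟩, ?_⟩
    filter_upwards [hx hin] with n hn
    have hn' : x n ∈ Icc (0:ℝ) (t + 1) := hn
    rw [dif_pos hn']
  have hui : ∀ p : ℕ → Icc (0:ℝ) (t + 1), UniformIntegrable (fun n => Y (p n).1) 1 μ := by
    intro p
    obtain ⟨h1, h2, C, h3⟩ := hUI
    refine ⟨fun n => h1 _, fun ε hε => ?_, C, fun n => h3 _⟩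
    obtain ⟨δ, hδ, h⟩ := h2 hε
    exact ⟨δ, hδ, fun n => h _⟩
  have hpt : ∀ (x : ℕ → ℝ) (p : ℕ → Icc (0:ℝ) (t + 1)), Tendsto x atTop F →
      (∀ᶠ n in atTop, x n = p n) → ∀ ω, Tendsto (fun n => Y (p n).1 ω) atTop (𝓝 (Z ω)) := by
    intro x p hx hp ω
    refine ((hZ ω).comp hx).congr' ?_
    filter_upwards [hp] with n hn
    simp [hn]
  have hint : Integrable Z μ := by
    obtain ⟨x, hx⟩ := exists_seq_tendsto F
    obtain ⟨p, hp⟩ := key x hx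
    exact (hui p).integrable_of_ae_tendsto (u := atTop) (Eventually.of_forall (hpt x p hx hp))
  refine ⟨hint, tendsto_of_seq_tendsto fun x hx => ?_⟩
  obtain ⟨p, hp⟩ := key x hx
  have h1 := tendsto_Lp_finite_of_tendsto_ae le_rfl ENNReal.one_ne_top
    (fun n => (hui p).1 n) (memLp_one_iff_integrable.2 hint) (hui p).2.1
    (Eventually.of_forall (hpt x p hx hp))
  have h2 := (ENNReal.tendsto_toReal ENNReal.zero_ne_top).comp h1
  simp only [ENNReal.toReal_zero] at h2
  refine h2.congr' ?_
  filter_upwards [hp] with n hn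
  simp only [Function.comp_apply]
  rw [hn, eLpNorm_one_eq_lintegral_enorm, ← integral_norm_eq_lintegral_enorm]
  · rfl
  · exact (((hui p).1 n).sub hint.aestronglyMeasurable)

theorem inv_tendsto (hH : CondH h Mh Lh ch Ch) (hY : NiceProcess μ Y) {t : ℝ} (ht : 0 ≤ t)
    {F : Filter ℝ} [F.NeBot] [F.IsCountablyGenerated] (hF : F ≤ 𝓝 t)
    (hF0 : ∀ᶠ s in F, 0 ≤ s) {Z : Ω → ℝ}
    (hZ : ∀ ω, Tendsto (fun s => Y s ω) F (𝓝 (Z ω))) {l a : ℝ → ℝ} {α lam : ℝ}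
    (ha : ∀ s, 0 ≤ s → ∫ ω, h s (Y s ω + a s) ∂μ = l s)
    (hl : Tendsto l F (𝓝 lam)) (hα : ∫ ω, h t (Z ω + α) ∂μ = lam) :
    Tendsto a F (𝓝 α) := by
  obtain ⟨hint, hL1⟩ := L1_limit hY ht hF hF0 hZ
  have hc := hH.ch_pos
  have hst : Tendsto (fun s => |s - t|) F (𝓝 0) := by
    have : Tendsto (fun s : ℝ => s - t) F (𝓝 (t - t)) := (tendsto_id.mono_left hF).sub_const t
    simpa using this.abs
  have hll : Tendsto (fun s => |l s - lam|) F (𝓝 0) := by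
    have := (hl.sub_const lam).abs
    simpa using this
  rw [tendsto_iff_dist_tendsto_zero]
  have hbd : Tendsto (fun s => ch⁻¹ * (|l s - lam| +
      (Lh * |s - t| + Ch * ∫ ω, |Y s ω - Z ω| ∂μ))) F (𝓝 0) := by
    have := (hll.add ((hst.const_mul Lh).add (hL1.const_mul Ch))).const_mul ch⁻¹
    simpa using this
  refine squeeze_zero' (Eventually.of_forall fun s => dist_nonneg) ?_ hbd
  filter_upwards [hF0] with s hs
  have h1 := H_diff hH hs ht hint (hY.integrable s hs) α α
  rw [hα] at h1
  simp only [sub_self, abs_zero, mul_zero, add_zero] at h1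
  have h2 : ch * |a s - α| ≤ |l s - ∫ ω, h s (Y s ω + α) ∂μ| := by
    rcases le_total (a s) α with h' | h'
    · have := H_lower hH hs (hY.integrable s hs) h'
      rw [ha s hs] at this
      rw [abs_sub_comm, abs_of_nonneg (sub_nonneg.2 h'), abs_sub_comm]
      exact this.trans (le_abs_self _)
    · have := H_lower hH hs (hY.integrable s hs) h'
      rw [ha s hs] at this
      rw [abs_of_nonneg (sub_nonneg.2 h')]
      exact this.trans (le_abs_self _)
  have h3 := abs_sub_le (l s) lam (∫ ω, h s (Y s ω + α) ∂μ)
  rw [abs_sub_comm lam] at h3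
  rw [Real.dist_eq, inv_mul_eq_div, le_div_iff₀ hc]
  linarith

theorem inv_cadlag (hH : CondH h Mh Lh ch Ch) (hY : NiceProcess μ Y) {l a : ℝ → ℝ}
    (ha : ∀ s, 0 ≤ s → ∫ ω, h s (Y s ω + a s) ∂μ = l s) (hl : CadlagOn l) : CadlagOn a := by
  constructor
  · intro t ht
    refine inv_tendsto hH hY ht nhdsWithin_le_nhds ?_ (fun ω => (hY.cadlag ω).1 t ht) ha
      (hl.1 t ht) (ha t ht)
    filter_upwards [self_mem_nhdsWithin] with s hs using ht.trans hs
  · intro t ht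
    obtain ⟨lam, hlam⟩ := hl.2 t ht
    choose Z hZ using fun ω => (hY.cadlag ω).2 t ht
    have hpos' : ∀ᶠ s in 𝓝[<] t, 0 < s := nhdsWithin_le_nhds (lt_mem_nhds ht)
    have hpos : ∀ᶠ s in 𝓝[<] t, 0 ≤ s := hpos'.mono fun s hs => hs.le
    have hint := (L1_limit hY ht.le nhdsWithin_le_nhds hpos hZ).1
    obtain ⟨α, hα⟩ := H_surj hH ht.le hint lam
    exact ⟨α, inv_tendsto hH hY ht.le nhdsWithin_le_nhds hpos hZ ha hlam hα⟩

theorem exists_inv (hH : CondH h Mh Lh ch Ch) (hY : NiceProcess μ Y) (l : ℝ → ℝ) :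
    ∃ a : ℝ → ℝ, ∀ s, 0 ≤ s → ∫ ω, h s (Y s ω + a s) ∂μ = l s := by
  have : ∀ s, ∃ z, 0 ≤ s → ∫ ω, h s (Y s ω + z) ∂μ = l s := by
    intro s
    by_cases hs : 0 ≤ s
    · obtain ⟨z, hz⟩ := H_surj hH hs (hY.integrable s hs) (l s)
      exact ⟨z, fun _ => hz⟩
    · exact ⟨0, fun h' => absurd h' hs⟩
  choose a ha using this
  exact ⟨a, ha⟩

end prob

/-- existence of a solution of the Skorokhod problem with mean minimality
condition and two constraints associated with `(h, Y, l, u)`. -/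
theorem stmt_4 {Ω : Type*} [MeasurableSpace Ω] (μ : Measure Ω) [IsProbabilityMeasure μ]
    (h : ℝ → ℝ → ℝ) (Mh Lh ch Ch : ℝ) (hH : CondH h Mh Lh ch Ch)
    (Y : ℝ → Ω → ℝ) (hY : NiceProcess μ Y)
    (l u : ℝ → ℝ) (hl : CadlagOn l) (hu : CadlagOn u)
    (hlu : ∀ t : ℝ, 0 ≤ t → l t ≤ u t)
    (h0 : (∫ ω, h 0 (Y 0 ω) ∂μ) ∈ Set.Icc (l 0) (u 0)) :
    ∃ (X : ℝ → Ω → ℝ) (k : ℝ → ℝ), MeanSP μ h Y l u X k := by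
  obtain ⟨a, ha⟩ := exists_inv hH hY l
  obtain ⟨b, hb⟩ := exists_inv hH hY u
  have hac := inv_cadlag hH hY ha hl
  have hbc := inv_cadlag hH hY hb hu
  have hsm : ∀ t, 0 ≤ t → StrictMono fun z => ∫ ω, h t (Y t ω + z) ∂μ :=
    fun t ht => H_strictMono hH ht (hY.integrable t ht)
  have hle : ∀ t, 0 ≤ t → ∀ x y, (∫ ω, h t (Y t ω + x) ∂μ) ≤ ∫ ω, h t (Y t ω + y) ∂μ ↔ x ≤ y :=
    fun t ht x y => (hsm t ht).le_iff_le
  have hlt : ∀ t, 0 ≤ t → ∀ x y, (∫ ω, h t (Y t ω + x) ∂μ) < ∫ ω, h t (Y t ω + y) ∂μ ↔ x < y :=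
    fun t ht x y => (hsm t ht).lt_iff_lt
  have hab : ∀ t, 0 ≤ t → a t ≤ b t := fun t ht => by
    rw [← hle t ht, ha t ht, hb t ht]; exact hlu t ht
  have ha0 : a 0 ≤ 0 := by
    rw [← hle 0 le_rfl, ha 0 le_rfl]; simpa using h0.1
  have hb0 : 0 ≤ b 0 := by
    rw [← hle 0 le_rfl, hb 0 le_rfl]; simpa using h0.2
  obtain ⟨k, hk0, hak, hkb, F, G⟩ := exists_flow hab ha0 hb0
  have hkc := flow_cadlag hkb hak F G hac hbc
  have hU : ∀ s, 0 ≤ s → (∫ ω, h s (Y s ω + k s) ∂μ) < u s → k s < b s := fun s hs hh => by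
    rwa [← hb s hs, hlt s hs] at hh
  have hL : ∀ s, 0 ≤ s → l s < (∫ ω, h s (Y s ω + k s) ∂μ) → -k s < -a s := fun s hs hh => by
    rw [← ha s hs, hlt s hs] at hh
    exact neg_lt_neg hh
  have hka' : ∀ t, 0 ≤ t → -k t ≤ -a t := fun t ht => neg_le_neg (hak t ht)
  refine ⟨fun t ω => Y t ω + k t, k, fun ω => ⟨fun t ht => ?_, fun t ht => ?_⟩, hkc, hk0,
    fun _ _ _ => rfl, fun t ht => ⟨?_, ?_⟩, fun t q ht htq => ⟨fun hh => ?_, fun hh => ?_⟩,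
    fun t ht => ?_⟩
  · exact ((hY.cadlag ω).1 t ht).add (hkc.1 t ht)
  · obtain ⟨A, hA⟩ := (hY.cadlag ω).2 t ht
    obtain ⟨K, hK⟩ := hkc.2 t ht
    exact ⟨A + K, hA.add hK⟩
  · rw [← ha t ht, hle t ht]; exact hak t ht
  · rw [← hb t ht, hle t ht]; exact hkb t ht
  · exact sub_nonneg.2 (flow_mono hkb F hbc hkc ht htq
      fun s h1 h2 => hU s (ht.trans h1.le) (hh s h1 h2))
  · have := flow_mono hka' G hac.neg_fun hkc.neg_fun ht htq
      fun s h1 h2 => hL s (ht.trans h1.le) (hh s h1 h2)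
    linarith
  · obtain ⟨K, hK⟩ := hkc.2 t ht
    rw [leftLim_eq_of_tendsto hK]
    refine ⟨fun hh => ?_, fun hh => ?_⟩
    · exact sub_nonneg.2 (flow_jump hkb F hbc ht hK (hU t ht.le hh))
    · have := flow_jump hka' G hac.neg_fun ht hK.neg (hL t ht.le hh)
      linarith
end
end

section
/- If (X, k) and (X', k') are both solutions of the Skorokhod problem with mean minimality condition and two constraints associated with (h, Y, l, u), then k_t = k'_t for all t ≥ 0 and X_t(ω) = X'_t(ω) for all t ≥ 0 and ω ∈ Ω. -/
open MeasureTheory Filter Set Function Topology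

noncomputable section

theorem det_aux (k k' f g l u : ℝ → ℝ) (hk : CadlagOn k) (hk' : CadlagOn k')
    (k0 : k 0 = 0) (k0' : k' 0 = 0)
    (hlt : ∀ t, 0 ≤ t → k' t < k t → g t < f t)
    (hf : ∀ t, 0 ≤ t → f t ≤ u t) (hg : ∀ t, 0 ≤ t → l t ≤ g t)
    (h1 : ∀ t q : ℝ, 0 ≤ t → t ≤ q → (∀ s, t < s → s ≤ q → l s < f s) → k q - k t ≤ 0)
    (h2 : ∀ t q : ℝ, 0 ≤ t → t ≤ q → (∀ s, t < s → s ≤ q → g s < u s) → 0 ≤ k' q - k' t)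
    (j1 : ∀ t, 0 < t → l t < f t → k t - Function.leftLim k t ≤ 0)
    (j2 : ∀ t, 0 < t → g t < u t → 0 ≤ k' t - Function.leftLim k' t)
    (q : ℝ) (hq : 0 ≤ q) : k q ≤ k' q := by
  by_contra! hc
  set S : Set ℝ := {s | 0 ≤ s ∧ s ≤ q ∧ k s ≤ k' s} with hS
  have hS0 : (0:ℝ) ∈ S := ⟨le_rfl, hq, by rw [k0, k0']⟩
  have hbd : BddAbove S := ⟨q, fun s hs => hs.2.1⟩
  set t := sSup S with ht
  have ht0 : 0 ≤ t := le_csSup hbd hS0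
  have htq : t ≤ q := csSup_le ⟨0, hS0⟩ fun s hs => hs.2.1
  have hpos : ∀ s, t < s → s ≤ q → k' s < k s := by
    intro s hs hsq
    by_contra! hcs
    exact absurd (le_csSup hbd (show s ∈ S from ⟨ht0.trans hs.le, hsq, hcs⟩)) (not_le.2 hs)
  have a1 := h1 t q ht0 htq fun s hs hsq =>
    (hg s (ht0.trans hs.le)).trans_lt (hlt s (ht0.trans hs.le) (hpos s hs hsq))
  have a2 := h2 t q ht0 htq fun s hs hsq =>
    (hlt s (ht0.trans hs.le) (hpos s hs hsq)).trans_le (hf s (ht0.trans hs.le))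
  have hDt : k' t < k t := by linarith
  have htpos : 0 < t := by
    rcases ht0.lt_or_eq with h | h
    · exact h
    · rw [← h, k0, k0'] at hDt; exact absurd hDt (lt_irrefl _)
  have b1 := j1 t htpos ((hg t ht0).trans_lt (hlt t ht0 hDt))
  have b2 := j2 t htpos ((hlt t ht0 hDt).trans_le (hf t ht0))
  obtain ⟨L, hL⟩ := hk.2 t htpos
  obtain ⟨L', hL'⟩ := hk'.2 t htpos
  rw [leftLim_eq_of_tendsto hL] at b1
  rw [leftLim_eq_of_tendsto hL'] at b2
  have hLL : L' < L := by linarith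
  have hev : ∀ᶠ s in 𝓝[<] t, k' s < k s := hL'.eventually_lt hL hLL
  obtain ⟨a, ha, hsub⟩ := (mem_nhdsLT_iff_exists_Ioo_subset).1 hev
  obtain ⟨s, hsS, has⟩ := exists_lt_of_lt_csSup ⟨0, hS0⟩ (show a < sSup S from ha)
  have hst : s ≤ t := le_csSup hbd hsS
  rcases hst.lt_or_eq with h | h
  · exact absurd (hsub ⟨has, h⟩) (not_lt.2 hsS.2.2)
  · rw [h] at hsS; exact absurd hsS.2.2 (not_le.2 hDt)

theorem int_aux {Ω : Type*} [MeasurableSpace Ω] (μ : Measure Ω) [IsProbabilityMeasure μ]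
    (h : ℝ → ℝ → ℝ) (Mh Lh ch Ch : ℝ) (hH : CondH h Mh Lh ch Ch)
    (Y : Ω → ℝ) (hY : Integrable Y μ) (t : ℝ) (ht : 0 ≤ t) (a b : ℝ) (hab : a < b) :
    (∫ ω, h t (Y ω + a) ∂μ) < ∫ ω, h t (Y ω + b) ∂μ := by
  have hint : ∀ c : ℝ, Integrable (fun ω => h t (Y ω + c)) μ := by
    intro c
    have hi : Integrable (fun ω => Y ω + c) μ := hY.add (integrable_const c)
    refine Integrable.mono' (g := fun ω => Mh * (1 + |Y ω + c|)) ?_ ?_ ?_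
    · exact ((integrable_const 1).add hi.abs).const_mul Mh
    · exact ((hH.strict_mono t ht).monotone.measurable.comp_aemeasurable
        hi.aemeasurable).aestronglyMeasurable
    · exact Eventually.of_forall fun ω => hH.growth t _ ht
  have hp : 0 < ch * (b - a) := mul_pos hH.ch_pos (sub_pos.2 hab)
  have key : (∫ ω, (h t (Y ω + a) + ch * (b - a)) ∂μ) ≤ ∫ ω, h t (Y ω + b) ∂μ := by
    refine integral_mono ((hint a).add (integrable_const _)) (hint b) fun ω => ?_
    have h1 := hH.lip_lower t (Y ω + b) (Y ω + a) ht
    have h2 := hH.strict_mono t ht (show Y ω + a < Y ω + b by linarith)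
    rw [abs_of_pos (sub_pos.2 h2), show Y ω + b - (Y ω + a) = b - a by ring,
      abs_of_pos (sub_pos.2 hab)] at h1
    show h t (Y ω + a) + ch * (b - a) ≤ h t (Y ω + b)
    linarith
  rw [integral_add (hint a) (integrable_const _)] at key
  simp at key
  linarith

theorem le_aux {Ω : Type*} [MeasurableSpace Ω] (μ : Measure Ω) [IsProbabilityMeasure μ]
    (h : ℝ → ℝ → ℝ) (Mh Lh ch Ch : ℝ) (hH : CondH h Mh Lh ch Ch)
    (Y : ℝ → Ω → ℝ) (hY : NiceProcess μ Y) (l u : ℝ → ℝ)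
    (X X' : ℝ → Ω → ℝ) (k k' : ℝ → ℝ)
    (hsol : MeanSP μ h Y l u X k) (hsol' : MeanSP μ h Y l u X' k') (t : ℝ) (ht : 0 ≤ t) :
    k t ≤ k' t := by
  obtain ⟨-, hk, k0, hX, hc, hm, hj⟩ := hsol
  obtain ⟨-, hk', k0', hX', hc', hm', hj'⟩ := hsol'
  refine det_aux k k' (fun s => ∫ ω, h s (X s ω) ∂μ) (fun s => ∫ ω, h s (X' s ω) ∂μ) l u hk hk'
    k0 k0' ?_ (fun s hs => (hc s hs).2) (fun s hs => (hc' s hs).1)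
    (fun s q hs hq => (hm s q hs hq).2) (fun s q hs hq => (hm' s q hs hq).1)
    (fun s hs => (hj s hs).2) (fun s hs => (hj' s hs).1) t ht
  intro s hs hlt
  simp only [hX s hs, hX' s hs]
  exact int_aux μ h Mh Lh ch Ch hH (Y s) (hY.integrable s hs) s hs _ _ hlt

/-- uniqueness of the solution of the Skorokhod problem with mean minimality
condition and two constraints. -/
theorem stmt_5 {Ω : Type*} [MeasurableSpace Ω] (μ : Measure Ω) [IsProbabilityMeasure μ]
    (h : ℝ → ℝ → ℝ) (Mh Lh ch Ch : ℝ) (hH : CondH h Mh Lh ch Ch)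
    (Y : ℝ → Ω → ℝ) (hY : NiceProcess μ Y)
    (l u : ℝ → ℝ) (hl : CadlagOn l) (hu : CadlagOn u)
    (hlu : ∀ t : ℝ, 0 ≤ t → l t ≤ u t)
    (h0 : (∫ ω, h 0 (Y 0 ω) ∂μ) ∈ Set.Icc (l 0) (u 0))
    (X X' : ℝ → Ω → ℝ) (k k' : ℝ → ℝ)
    (hsol : MeanSP μ h Y l u X k) (hsol' : MeanSP μ h Y l u X' k') :
    ∀ t : ℝ, 0 ≤ t → k t = k' t ∧ ∀ ω, X t ω = X' t ω := by
  intro t ht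
  have e : k t = k' t := le_antisymm
    (le_aux μ h Mh Lh ch Ch hH Y hY l u X X' k k' hsol hsol' t ht)
    (le_aux μ h Mh Lh ch Ch hH Y hY l u X' X k' k hsol' hsol t ht)
  refine ⟨e, fun ω => ?_⟩
  rw [hsol.2.2.2.1 t ht ω, hsol'.2.2.2.1 t ht ω, e]
end
end

section
/- If (X, k) is a solution of the Skorokhod problem with mean minimality condition and two constraints associated with (h, Y, l, u), then for every t ≥ 0, k_t = −max( 0 ∧ inf_{0≤u≤t}(E[Y_u] − l̄_u), sup_{0≤s≤t}[ (E[Y_s] − ū_s) ∧ inf_{s≤u≤t}(E[Y_u] − l̄_u) ] ), where ∧ denotes minimum. -/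
open MeasureTheory Filter Set Function Topology

noncomputable section

/-- Last upcrossing of the level `c`. -/
lemma aux_cross (κ b : ℝ → ℝ)
    (hmin : ∀ t q : ℝ, 0 ≤ t → t ≤ q → (∀ s, t < s → s ≤ q → b s < κ s) → κ q ≤ κ t)
    (hjump : ∀ t : ℝ, 0 < t → ∃ L, Tendsto κ (𝓝[<] t) (𝓝 L) ∧ (b t < κ t → κ t ≤ L))
    (s t c : ℝ) (hs : 0 ≤ s) (hst : s ≤ t) (hsc : κ s < c) (htc : c < κ t) :
    ∃ σ, s < σ ∧ σ ≤ t ∧ (∀ r, σ ≤ r → r ≤ t → c ≤ κ r) ∧ c ≤ b σ := by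
  set S : Set ℝ := {r | s ≤ r ∧ r ≤ t ∧ κ r < c} with hS
  have hsS : s ∈ S := ⟨le_rfl, hst, hsc⟩
  have hbdd : BddAbove S := ⟨t, fun r hr => hr.2.1⟩
  set σ := sSup S with hσ
  have h1 : s ≤ σ := le_csSup hbdd hsS
  have h2 : σ ≤ t := csSup_le ⟨s, hsS⟩ fun r hr => hr.2.1
  have h3 : ∀ r, σ < r → r ≤ t → c ≤ κ r := by
    intro r hr hrt
    by_contra hcon
    have : r ∈ S := ⟨by linarith, hrt, not_le.mp hcon⟩
    exact absurd (le_csSup hbdd this) (not_le.mpr hr)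
  by_cases hb : ∀ r, σ < r → r ≤ t → b r < κ r
  · have h4 : κ t ≤ κ σ := hmin σ t (hs.trans h1) h2 hb
    have hnot : σ ∉ S := fun hh => by have := hh.2.2; linarith
    have hlt : s < σ := lt_of_le_of_ne h1 fun he => hnot (he ▸ hsS)
    obtain ⟨L, hL, hLj⟩ := hjump σ (lt_of_le_of_lt hs hlt)
    have hLc : L ≤ c := by
      by_contra hcon
      have hev := hL.eventually (lt_mem_nhds (not_le.mp hcon))
      obtain ⟨p, hp, hpp⟩ := (mem_nhdsLT_iff_exists_Ioo_subset).mp hev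
      obtain ⟨r, hr, hpr⟩ := exists_lt_of_lt_csSup ⟨s, hsS⟩ hp
      have hrσ : r < σ := lt_of_le_of_ne (le_csSup hbdd hr) fun he => hnot (he ▸ hr)
      have h5 : c < κ r := hpp ⟨hpr, hrσ⟩
      have := hr.2.2
      linarith
    refine ⟨σ, hlt, h2, ?_, ?_⟩
    · intro r hr hrt
      rcases hr.eq_or_lt with he | hl
      · rw [← he]; linarith
      · exact h3 r hl hrt
    · by_contra hcon
      have := hLj (by linarith)
      linarith
  · push Not at hb
    obtain ⟨r, hr, hrt, hbr⟩ := hb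
    exact ⟨r, by linarith, hrt, fun r' h' h'' => h3 r' (by linarith) h'', (h3 r hr hrt).trans hbr⟩

lemma aux_bdd (κ : ℝ → ℝ) (hκ : CadlagOn κ) (t : ℝ) : ∃ m, ∀ r ∈ Icc 0 t, m ≤ κ r := by
  refine (isCompact_Icc (a := (0:ℝ)) (b := t)).induction_on
    (p := fun s => ∃ m, ∀ r ∈ s, m ≤ κ r) ⟨0, by simp⟩ ?_ ?_ ?_
  · rintro s s' hss ⟨m, hm⟩
    exact ⟨m, fun r hr => hm r (hss hr)⟩
  · rintro s s' ⟨m, hm⟩ ⟨m', hm'⟩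
    refine ⟨min m m', ?_⟩
    rintro r (hr | hr)
    · exact (min_le_left _ _).trans (hm r hr)
    · exact (min_le_right _ _).trans (hm' r hr)
  · intro x hx
    have hR : {r | κ x - 1 < κ r} ∈ 𝓝[≥] x :=
      (hκ.1 x hx.1).eventually (lt_mem_nhds (by linarith))
    rcases hx.1.eq_or_lt with he | hl
    · refine ⟨{r | κ x - 1 < κ r}, ?_, κ x - 1, fun r hr => le_of_lt hr⟩
      refine nhdsWithin_mono x ?_ hR
      intro r hr
      rw [← he]; exact hr.1
    · obtain ⟨L, hL⟩ := hκ.2 x hl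
      have hLL : {r | L - 1 < κ r} ∈ 𝓝[<] x := hL.eventually (lt_mem_nhds (by linarith))
      refine ⟨{r | L - 1 < κ r} ∪ {r | κ x - 1 < κ r}, ?_, min (L - 1) (κ x - 1), ?_⟩
      · apply mem_nhdsWithin_of_mem_nhds
        rw [← nhdsLT_sup_nhdsGE]
        exact ⟨mem_of_superset hLL subset_union_left, mem_of_superset hR subset_union_right⟩
      · rintro r (hr | hr)
        · exact (min_le_left _ _).trans (le_of_lt hr)
        · exact (min_le_right _ _).trans (le_of_lt hr)

lemma aux_formula (κ a b : ℝ → ℝ) (hκ : CadlagOn κ) (hκ0 : κ 0 = 0)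
    (hb : ∀ t, 0 ≤ t → b t ≤ κ t) (ha : ∀ t, 0 ≤ t → κ t ≤ a t)
    (hmin1 : ∀ t q : ℝ, 0 ≤ t → t ≤ q → (∀ s, t < s → s ≤ q → b s < κ s) → κ q ≤ κ t)
    (hmin2 : ∀ t q : ℝ, 0 ≤ t → t ≤ q → (∀ s, t < s → s ≤ q → κ s < a s) → κ t ≤ κ q)
    (hj1 : ∀ t : ℝ, 0 < t → ∃ L, Tendsto κ (𝓝[<] t) (𝓝 L) ∧ (b t < κ t → κ t ≤ L))
    (hj2 : ∀ t : ℝ, 0 < t → ∃ L, Tendsto κ (𝓝[<] t) (𝓝 L) ∧ (κ t < a t → L ≤ κ t))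
    (t : ℝ) (ht : 0 ≤ t) :
    κ t = max (min 0 (sInf (a '' Icc 0 t)))
      (sSup ((fun s => min (b s) (sInf (a '' Icc s t))) '' Icc 0 t)) := by
  obtain ⟨m, hm⟩ := aux_bdd κ hκ t
  have hbb : ∀ s, 0 ≤ s → BddBelow (a '' Icc s t) := by
    intro s hs
    refine ⟨m, ?_⟩
    rintro _ ⟨r, hr, rfl⟩
    exact (hm r ⟨hs.trans hr.1, hr.2⟩).trans (ha r (hs.trans hr.1))
  have hbA : BddAbove ((fun s => min (b s) (sInf (a '' Icc s t))) '' Icc 0 t) := by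
    refine ⟨a t, ?_⟩
    rintro _ ⟨s, hs, rfl⟩
    exact (min_le_right _ _).trans (csInf_le (hbb s hs.1) ⟨t, ⟨hs.2, le_rfl⟩, rfl⟩)
  have keyA : ∀ s n, 0 ≤ s → s ≤ t → n ≤ κ s → n ≤ sInf (a '' Icc s t) → n ≤ κ t := by
    intro s n hs hst hn hna
    by_contra hcon
    obtain ⟨c, hc1, hc2⟩ := exists_between (not_le.mp hcon)
    obtain ⟨σ, h1, h2, -, h4⟩ := aux_cross (fun r => - κ r) (fun r => - a r)
      (fun t q h0 h1 h2 => neg_le_neg (hmin2 t q h0 h1 fun s h3 h4 => neg_lt_neg_iff.mp (h2 s h3 h4)))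
      (fun t h0 => by
        obtain ⟨L, hL, hL'⟩ := hj2 t h0
        exact ⟨-L, hL.neg, fun h => neg_le_neg (hL' (neg_lt_neg_iff.mp h))⟩)
      s t (-c) hs hst (by linarith) (by linarith)
    have := csInf_le (hbb s hs) ⟨σ, ⟨h1.le, h2⟩, rfl⟩
    linarith
  apply le_antisymm
  · by_contra hcon
    obtain ⟨c, hc1, hc2⟩ := exists_between (not_le.mp hcon)
    obtain ⟨hR1, hR2⟩ := max_lt_iff.mp hc1
    by_cases hex : ∃ s, 0 ≤ s ∧ s ≤ t ∧ κ s < c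
    · obtain ⟨s, hs, hst, hsc⟩ := hex
      obtain ⟨σ, h1, h2, h3, h4⟩ := aux_cross κ b hmin1 hj1 s t c hs hst hsc hc2
      have hσ0 : 0 ≤ σ := by linarith
      have h5 : c ≤ sInf (a '' Icc σ t) := by
        refine le_csInf ⟨a t, t, ⟨h2, le_rfl⟩, rfl⟩ ?_
        rintro _ ⟨r, hr, rfl⟩
        exact (h3 r hr.1 hr.2).trans (ha r (hσ0.trans hr.1))
      have h6 := le_csSup hbA ⟨σ, ⟨hσ0, h2⟩, rfl⟩
      have h7 := le_min h4 h5
      simp only at h6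
      linarith
    · push Not at hex
      have h5 : c ≤ sInf (a '' Icc 0 t) := by
        refine le_csInf ⟨a t, t, ⟨ht, le_rfl⟩, rfl⟩ ?_
        rintro _ ⟨r, hr, rfl⟩
        exact (hex r hr.1 hr.2).trans (ha r hr.1)
      have h6 := hex 0 le_rfl ht
      rw [hκ0] at h6
      exact absurd (le_min h6 h5) (not_le.mpr hR1)
  · apply max_le
    · exact keyA 0 _ le_rfl ht ((min_le_left _ _).trans hκ0.ge) (min_le_right _ _)
    · refine csSup_le ⟨_, 0, ⟨le_rfl, ht⟩, rfl⟩ ?_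
      rintro _ ⟨s, hs, rfl⟩
      exact keyA s _ hs.1 hs.2 ((min_le_left _ _).trans (hb s hs.1)) (min_le_right _ _)

lemma aux_mono {Ω : Type*} [MeasurableSpace Ω] (μ : Measure Ω) [IsProbabilityMeasure μ]
    (h : ℝ → ℝ → ℝ) (Mh Lh ch Ch : ℝ) (hH : CondH h Mh Lh ch Ch)
    (Z : Ω → ℝ) (hZ : Integrable Z μ) (t : ℝ) (ht : 0 ≤ t) :
    StrictMono fun z : ℝ => ∫ ω, h t (Z ω + z) ∂μ := by
  have hmeas : Measurable (h t) := hH.meas.comp (measurable_const.prodMk measurable_id)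
  have hint : ∀ z : ℝ, Integrable (fun ω => h t (Z ω + z)) μ := by
    intro z
    have hZz : Integrable (fun ω => Z ω + z) μ := hZ.add (integrable_const z)
    refine Integrable.mono' (g := fun ω => Mh * (1 + |Z ω + z|))
      (((integrable_const 1).add hZz.abs).const_mul Mh)
      (hmeas.comp_aemeasurable hZz.aemeasurable).aestronglyMeasurable ?_
    exact Eventually.of_forall fun ω => hH.growth t _ ht
  intro z z' hzz
  have hge : ∫ ω, (h t (Z ω + z) + ch * (z' - z)) ∂μ ≤ ∫ ω, h t (Z ω + z') ∂μ := by
    refine integral_mono ((hint z).add (integrable_const _)) (hint z') ?_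
    intro ω
    have h1 := hH.lip_lower t (Z ω + z') (Z ω + z) ht
    have h2 := hH.strict_mono t ht (show Z ω + z < Z ω + z' by linarith)
    rw [abs_of_pos (sub_pos.mpr h2), abs_of_pos (by linarith)] at h1
    have h3 : Z ω + z' - (Z ω + z) = z' - z := by ring
    rw [h3] at h1
    simp only
    linarith
  rw [integral_add (hint z) (integrable_const _)] at hge
  simp only [integral_const, probReal_univ, smul_eq_mul, one_mul] at hge
  have := mul_pos hH.ch_pos (sub_pos.mpr hzz)
  simp only
  linarith

/-- explicit formula for the compensating reflection function `k`. -/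
theorem stmt_6 {Ω : Type*} [MeasurableSpace Ω] (μ : Measure Ω) [IsProbabilityMeasure μ]
    (h : ℝ → ℝ → ℝ) (Mh Lh ch Ch : ℝ) (hH : CondH h Mh Lh ch Ch)
    (Y : ℝ → Ω → ℝ) (hY : NiceProcess μ Y)
    (l u : ℝ → ℝ) (hl : CadlagOn l) (hu : CadlagOn u)
    (hlu : ∀ t : ℝ, 0 ≤ t → l t ≤ u t)
    (h0 : (∫ ω, h 0 (Y 0 ω) ∂μ) ∈ Set.Icc (l 0) (u 0))
    (lbar ubar : ℝ → ℝ)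
    (hlbar : ∀ t : ℝ, 0 ≤ t → (∫ ω, h t (Y t ω - (∫ ω', Y t ω' ∂μ) + lbar t) ∂μ) = l t)
    (hubar : ∀ t : ℝ, 0 ≤ t → (∫ ω, h t (Y t ω - (∫ ω', Y t ω' ∂μ) + ubar t) ∂μ) = u t)
    (X : ℝ → Ω → ℝ) (k : ℝ → ℝ) (hsol : MeanSP μ h Y l u X k) :
    ∀ t : ℝ, 0 ≤ t →
      k t = -max
        (min 0 (sInf ((fun r => (∫ ω, Y r ω ∂μ) - lbar r) '' Set.Icc 0 t)))
        (sSup ((fun s => min ((∫ ω, Y s ω ∂μ) - ubar s)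
            (sInf ((fun r => (∫ ω, Y r ω ∂μ) - lbar r) '' Set.Icc s t))) '' Set.Icc 0 t)) := by
  obtain ⟨-, hk, hk0, hX, hcon, hmin, hjump⟩ := hsol
  set G : ℝ → ℝ → ℝ := fun t z => ∫ ω, h t (Y t ω + z) ∂μ with hG
  have hGm : ∀ t, 0 ≤ t → StrictMono (G t) := fun t ht =>
    aux_mono μ h Mh Lh ch Ch hH (Y t) (hY.integrable t ht) t ht
  have hGX : ∀ t, 0 ≤ t → (∫ ω, h t (X t ω) ∂μ) = G t (k t) := by
    intro t ht
    simp only [hG, hX t ht]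
  have hGl : ∀ t, 0 ≤ t → l t = G t (lbar t - ∫ ω, Y t ω ∂μ) := by
    intro t ht
    rw [← hlbar t ht]
    simp only [hG]
    congr 1; ext ω; congr 1; ring
  have hGu : ∀ t, 0 ≤ t → u t = G t (ubar t - ∫ ω, Y t ω ∂μ) := by
    intro t ht
    rw [← hubar t ht]
    simp only [hG]
    congr 1; ext ω; congr 1; ring
  -- translation of the constraints
  have e1 : ∀ t, 0 ≤ t → (∫ ω, Y t ω ∂μ) - ubar t < -k t → (∫ ω, h t (X t ω) ∂μ) < u t := by
    intro t ht hlt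
    rw [hGX t ht, hGu t ht]
    exact hGm t ht (by linarith)
  have e2 : ∀ t, 0 ≤ t → -k t < (∫ ω, Y t ω ∂μ) - lbar t → l t < ∫ ω, h t (X t ω) ∂μ := by
    intro t ht hlt
    rw [hGX t ht, hGl t ht]
    exact hGm t ht (by linarith)
  have hleft : ∀ t, 0 < t → Tendsto (fun r => -k r) (𝓝[<] t) (𝓝 (-Function.leftLim k t)) := by
    intro t ht
    obtain ⟨L, hL⟩ := hk.2 t ht
    rw [leftLim_eq_of_tendsto hL]
    exact hL.neg
  intro t ht
  have := aux_formula (fun r => -k r) (fun r => (∫ ω, Y r ω ∂μ) - lbar r)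
    (fun r => (∫ ω, Y r ω ∂μ) - ubar r)
    ⟨fun t ht => (hk.1 t ht).neg, fun t ht => ⟨_, hleft t ht⟩⟩ (by simp [hk0])
    (fun t ht => by
      have := (hcon t ht).2
      rw [hGX t ht, hGu t ht, (hGm t ht).le_iff_le] at this
      linarith)
    (fun t ht => by
      have := (hcon t ht).1
      rw [hGX t ht, hGl t ht, (hGm t ht).le_iff_le] at this
      linarith)
    (fun t q ht htq hh => by
      have := (hmin t q ht htq).1 fun s h1 h2 => e1 s (by linarith) (hh s h1 h2)
      linarith)
    (fun t q ht htq hh => by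
      have := (hmin t q ht htq).2 fun s h1 h2 => e2 s (by linarith) (hh s h1 h2)
      linarith)
    (fun t ht => ⟨_, hleft t ht, fun hh => by
      have := (hjump t ht).1 (e1 t ht.le hh)
      linarith⟩)
    (fun t ht => ⟨_, hleft t ht, fun hh => by
      have := (hjump t ht).2 (e2 t ht.le hh)
      linarith⟩)
    t ht
  exact neg_eq_iff_eq_neg.mp this
end
end

section
/- Let k : [0,∞) → ℝ be a càdlàg function with k_0 = 0 and let X be the process X_t = Y_t + k_t. Set y_t = E[Y_t] and x_t = y_t + k_t. Then (X, k) is a solution of the Skorokhod problem with mean minimality condition and two constraints associated with (h, Y, l, u) if and only if (x, k) is a solution of the deterministic Skorokhod problem SP_{l̄}^{ū}(y). -/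
open MeasureTheory Filter Set Function Topology

noncomputable section

/-- Vitali: expectations converge along a countably generated filter of times. -/
lemma tendsto_mean_aux {Ω : Type*} [MeasurableSpace Ω] (μ : Measure Ω) [IsProbabilityMeasure μ]
    (Y : ℝ → Ω → ℝ) (hY : NiceProcess μ Y) (q : ℝ) (hq : 0 ≤ q) (F : Filter ℝ)
    [F.IsCountablyGenerated] (hF : ∀ᶠ s in F, s ∈ Set.Icc 0 q) (L : Ω → ℝ)
    (hL : ∀ ω, Tendsto (fun s => Y s ω) F (𝓝 (L ω))) :
    Tendsto (fun s => ∫ ω, Y s ω ∂μ) F (𝓝 (∫ ω, L ω ∂μ)) := by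
  apply tendsto_of_seq_tendsto
  intro s hs
  let s' : ℕ → Set.Icc (0:ℝ) q := fun n => Set.projIcc 0 q hq (s n)
  have hev : ∀ᶠ n in atTop, (s' n : ℝ) = s n := by
    filter_upwards [hs.eventually hF] with n hn
    simp only [s', Set.projIcc_of_mem hq hn]
  have hUI : UniformIntegrable (fun n => Y (s' n).1) 1 μ := by
    obtain ⟨h1, h2, C, hC⟩ := hY.unifInt q hq
    refine ⟨fun n => h1 (s' n), fun ε hε => ?_, C, fun n => hC (s' n)⟩
    obtain ⟨δ, hδ, H⟩ := h2 hε
    exact ⟨δ, hδ, fun n => H (s' n)⟩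
  have hlim : ∀ ω, Tendsto (fun n => Y (s' n).1 ω) atTop (𝓝 (L ω)) := by
    intro ω
    refine ((hL ω).comp hs).congr' ?_
    filter_upwards [hev] with n hn
    simp [hn]
  have hLm : MemLp L 1 μ := hUI.memLp_of_ae_tendsto (Eventually.of_forall hlim)
  have hT := tendsto_Lp_finite_of_tendsto_ae le_rfl ENNReal.one_ne_top hUI.1 hLm hUI.2.1
    (Eventually.of_forall hlim)
  have hI := tendsto_integral_of_L1' L hLm.1
    (Eventually.of_forall fun n => hY.integrable _ (s' n).2.1) hT
  refine hI.congr' ?_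
  filter_upwards [hev] with n hn
  simp only [Function.comp, hn]

lemma cadlag_mean_aux {Ω : Type*} [MeasurableSpace Ω] (μ : Measure Ω) [IsProbabilityMeasure μ]
    (Y : ℝ → Ω → ℝ) (hY : NiceProcess μ Y) : CadlagOn (fun t => ∫ ω, Y t ω ∂μ) := by
  constructor
  · intro t ht
    refine tendsto_mean_aux μ Y hY (t+1) (by linarith) _ ?_ (Y t)
      (fun ω => (hY.cadlag ω).1 t ht)
    have : Set.Iio (t+1) ∈ 𝓝[Set.Ici t] t := mem_nhdsWithin_of_mem_nhds (Iio_mem_nhds (by linarith))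
    filter_upwards [this, self_mem_nhdsWithin] with s hs hs'
    exact ⟨ht.trans hs', le_of_lt hs⟩
  · intro t ht
    choose L hL using fun ω => (hY.cadlag ω).2 t ht
    refine ⟨_, tendsto_mean_aux μ Y hY t ht.le _ ?_ L hL⟩
    have : Set.Ioi 0 ∈ 𝓝[Set.Iio t] t := mem_nhdsWithin_of_mem_nhds (Ioi_mem_nhds ht)
    filter_upwards [this, self_mem_nhdsWithin] with s hs hs'
    exact ⟨le_of_lt hs, le_of_lt hs'⟩

lemma cadlag_add_aux {f g F : ℝ → ℝ} (hf : CadlagOn f) (hg : CadlagOn g)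
    (hF : ∀ t, 0 ≤ t → F t = f t + g t) : CadlagOn F := by
  constructor
  · intro t ht
    refine ((hf.1 t ht).add (hg.1 t ht)).congr (fun s hs => hF s (ht.trans hs)) (hF t ht)
  · intro t ht
    obtain ⟨a, ha⟩ := hf.2 t ht
    obtain ⟨b, hb⟩ := hg.2 t ht
    refine ⟨a + b, (ha.add hb).congr' ?_⟩
    have : Set.Ioi 0 ∈ 𝓝[Set.Iio t] t := mem_nhdsWithin_of_mem_nhds (Ioi_mem_nhds ht)
    filter_upwards [this] with s hs
    exact (hF s (le_of_lt hs)).symm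

lemma strictMono_mean_aux {Ω : Type*} [MeasurableSpace Ω] (μ : Measure Ω) [IsProbabilityMeasure μ]
    (h : ℝ → ℝ → ℝ) (Mh Lh ch Ch : ℝ) (hH : CondH h Mh Lh ch Ch) (Z : Ω → ℝ)
    (hZ : Integrable Z μ) (t : ℝ) (ht : 0 ≤ t) :
    StrictMono (fun c => ∫ ω, h t (Z ω + c) ∂μ) := by
  have hm : Measurable (h t) := hH.meas.comp measurable_prodMk_left
  have hint : ∀ c, Integrable (fun ω => h t (Z ω + c)) μ := by
    intro c
    have hZc : Integrable (fun ω => Z ω + c) μ := hZ.add (integrable_const c)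
    have hb : Integrable (fun ω => Mh * (1 + |Z ω + c|)) μ :=
      ((integrable_const 1).add hZc.abs).const_mul Mh
    refine hb.mono' (hm.comp_aemeasurable hZc.aemeasurable).aestronglyMeasurable ?_
    exact Eventually.of_forall fun ω => hH.growth t _ ht
  intro c d hcd
  have h1 : ∫ ω, (h t (Z ω + c) + ch * (d - c)) ∂μ ≤ ∫ ω, h t (Z ω + d) ∂μ := by
    refine integral_mono ((hint c).add (integrable_const _)) (hint d) fun ω => ?_
    have a := hH.lip_lower t (Z ω + d) (Z ω + c) ht
    have b := hH.strict_mono t ht (show Z ω + c < Z ω + d by linarith)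
    rw [abs_of_pos (by linarith), abs_of_pos (by linarith)] at a
    have : Z ω + d - (Z ω + c) = d - c := by ring
    rw [this] at a
    simp only
    linarith
  rw [integral_add (hint c) (integrable_const _)] at h1
  simp at h1
  have := mul_pos hH.ch_pos (sub_pos.2 hcd)
  simp only
  linarith

/-- `(X, k)` solves the mean Skorokhod problem for `(h, Y, l, u)` iff
`(x, k)`, with `x_t = E[Y_t] + k_t`, solves the deterministic Skorokhod problem
`SP_{l̄}^{ū}(y)` with `y_t = E[Y_t]`. -/
theorem stmt_7 {Ω : Type*} [MeasurableSpace Ω] (μ : Measure Ω) [IsProbabilityMeasure μ]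
    (h : ℝ → ℝ → ℝ) (Mh Lh ch Ch : ℝ) (hH : CondH h Mh Lh ch Ch)
    (Y : ℝ → Ω → ℝ) (hY : NiceProcess μ Y)
    (l u : ℝ → ℝ) (hl : CadlagOn l) (hu : CadlagOn u)
    (hlu : ∀ t : ℝ, 0 ≤ t → l t ≤ u t)
    (h0 : (∫ ω, h 0 (Y 0 ω) ∂μ) ∈ Set.Icc (l 0) (u 0))
    (lbar ubar : ℝ → ℝ)
    (hlbar : ∀ t : ℝ, 0 ≤ t → (∫ ω, h t (Y t ω - (∫ ω', Y t ω' ∂μ) + lbar t) ∂μ) = l t)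
    (hubar : ∀ t : ℝ, 0 ≤ t → (∫ ω, h t (Y t ω - (∫ ω', Y t ω' ∂μ) + ubar t) ∂μ) = u t)
    (k : ℝ → ℝ) (hk : CadlagOn k) (hk0 : k 0 = 0)
    (X : ℝ → Ω → ℝ) (hX : ∀ t : ℝ, 0 ≤ t → ∀ ω, X t ω = Y t ω + k t)
    (x : ℝ → ℝ) (hx : ∀ t : ℝ, 0 ≤ t → x t = (∫ ω, Y t ω ∂μ) + k t) :
    MeanSP μ h Y l u X k ↔ DetSP (fun t => ∫ ω, Y t ω ∂μ) lbar ubar x k := by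
  have hcX : ∀ ω, CadlagOn fun t => X t ω := fun ω =>
    cadlag_add_aux (hY.cadlag ω) hk (fun t ht => hX t ht ω)
  have hcx : CadlagOn x := cadlag_add_aux (cadlag_mean_aux μ Y hY) hk hx
  have hmono : ∀ t, 0 ≤ t →
      StrictMono (fun c => ∫ ω, h t (Y t ω - (∫ ω', Y t ω' ∂μ) + c) ∂μ) := fun t ht =>
    strictMono_mean_aux μ h Mh Lh ch Ch hH (fun ω => Y t ω - ∫ ω', Y t ω' ∂μ)
      ((hY.integrable t ht).sub (integrable_const _)) t ht
  have hE : ∀ t, 0 ≤ t →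
      ∫ ω, h t (X t ω) ∂μ = ∫ ω, h t (Y t ω - (∫ ω', Y t ω' ∂μ) + x t) ∂μ := by
    intro t ht
    congr 1
    funext ω
    rw [hX t ht, hx t ht]
    congr 1
    ring
  have hul : ∀ t, 0 ≤ t → ((∫ ω, h t (X t ω) ∂μ) < u t ↔ x t < ubar t) := fun t ht => by
    rw [hE t ht, ← hubar t ht]; exact (hmono t ht).lt_iff_lt
  have hll : ∀ t, 0 ≤ t → (l t < (∫ ω, h t (X t ω) ∂μ) ↔ lbar t < x t) := fun t ht => by
    rw [hE t ht, ← hlbar t ht]; exact (hmono t ht).lt_iff_lt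
  have hicc : ∀ t, 0 ≤ t → ((∫ ω, h t (X t ω) ∂μ) ∈ Set.Icc (l t) (u t) ↔
      x t ∈ Set.Icc (lbar t) (ubar t)) := fun t ht => by
    rw [hE t ht, ← hlbar t ht, ← hubar t ht]
    exact and_congr (hmono t ht).le_iff_le (hmono t ht).le_iff_le
  constructor
  · rintro ⟨-, -, -, -, h1, h2, h3⟩
    refine ⟨hcx, hk, hk0, fun t ht => ⟨hx t ht, (hicc t ht).1 (h1 t ht)⟩, fun t q ht htq =>
      ⟨fun H => (h2 t q ht htq).1 fun s hs hsq => (hul s (ht.trans hs.le)).2 (H s hs hsq),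
       fun H => (h2 t q ht htq).2 fun s hs hsq => (hll s (ht.trans hs.le)).2 (H s hs hsq)⟩,
      fun t ht => ⟨fun H => (h3 t ht).1 ((hul t ht.le).2 H),
        fun H => (h3 t ht).2 ((hll t ht.le).2 H)⟩⟩
  · rintro ⟨-, -, -, h1, h2, h3⟩
    refine ⟨hcX, hk, hk0, hX, fun t ht => (hicc t ht).2 (h1 t ht).2, fun t q ht htq =>
      ⟨fun H => (h2 t q ht htq).1 fun s hs hsq => (hul s (ht.trans hs.le)).1 (H s hs hsq),
       fun H => (h2 t q ht htq).2 fun s hs hsq => (hll s (ht.trans hs.le)).1 (H s hs hsq)⟩,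
      fun t ht => ⟨fun H => (h3 t ht).1 ((hul t ht.le).1 H),
        fun H => (h3 t ht).2 ((hll t ht.le).1 H)⟩⟩
end
end

section
/- Let h¹ and h² both satisfy condition (H), with lower Lipschitz-in-x constant c_{h¹} for h¹ and upper Lipschitz-in-x constant C_{h²} for h². Let Y¹, Y² be processes on the same probability space, each with càdlàg paths, integrable values and uniformly integrable on compact time intervals, let lⁱ, uⁱ be càdlàg with lⁱ ≤ uⁱ and lⁱ_0 ≤ E[hⁱ(0, Yⁱ_0)] ≤ uⁱ_0, and let (Xⁱ, kⁱ) be the solution of the Skorokhod problem with mean minimality condition and two constraints associated with (hⁱ, Yⁱ, lⁱ, uⁱ), i = 1, 2. Put C = max( (c_{h¹})⁻¹, 2·C_{h²}·(c_{h¹})⁻¹ + 1 ). Then for every q ≥ 0: sup_{t≤q} |k¹_t − k²_t| ≤ C·( sup_{(t,x)∈[0,q]×ℝ} |h¹(t,x) − h²(t,x)| + sup_{t≤q} E|Y¹_t − Y²_t| + sup_{t≤q} max(|l¹_t − l²_t|, |u¹_t − u²_t|) ), and E[ sup_{t≤q} |X¹_t − X²_t| ] ≤ (C+1)·E[ sup_{t≤q}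 |Y¹_t − Y²_t| ] + C·( sup_{(t,x)∈[0,q]×ℝ} |h¹(t,x) − h²(t,x)| + sup_{t≤q} max(|l¹_t − l²_t|, |u¹_t − u²_t|) ). -/
open MeasureTheory Filter Set Function Topology

noncomputable section

/-- A càdlàg function is bounded in absolute value on compact intervals. -/
theorem cadlag_bdd (f : ℝ → ℝ) (hf : CadlagOn f) (q : ℝ) :
    ∃ M, ∀ t, 0 ≤ t → t ≤ q → |f t| ≤ M := by
  have : ∃ M, ∀ t ∈ Set.Icc (0:ℝ) q, |f t| ≤ M := by
    refine (isCompact_Icc (a := (0:ℝ)) (b := q)).induction_on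
      (p := fun s => ∃ M, ∀ t ∈ s, |f t| ≤ M) ⟨0, by simp⟩ ?_ ?_ ?_
    · rintro s t hst ⟨M, hM⟩
      exact ⟨M, fun x hx => hM x (hst hx)⟩
    · rintro s t ⟨M, hM⟩ ⟨N, hN⟩
      refine ⟨max M N, fun x hx => ?_⟩
      rcases hx with hx | hx
      · exact (hM x hx).trans (le_max_left _ _)
      · exact (hN x hx).trans (le_max_right _ _)
    · intro t ht
      have hr : ∀ᶠ s in 𝓝[Set.Ici t] t, |f s| ≤ |f t| + 1 := by
        have := (hf.1 t ht.1).tendsto.abs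
        exact (this.eventually (gt_mem_nhds (lt_add_one |f t|))).mono fun _ h => h.le
      rcases ht.1.eq_or_lt with h0 | h0
      · subst h0
        refine ⟨_, nhdsWithin_mono _ Set.Icc_subset_Ici_self hr, |f 0| + 1, fun x hx => hx⟩
      · obtain ⟨L, hL⟩ := hf.2 t h0
        have hl : ∀ᶠ s in 𝓝[Set.Iio t] t, |f s| ≤ |L| + 1 :=
          (hL.abs.eventually (gt_mem_nhds (lt_add_one |L|))).mono fun _ h => h.le
        have : ∀ᶠ s in 𝓝[Set.Iio t] t ⊔ 𝓝[Set.Ici t] t, |f s| ≤ max (|L| + 1) (|f t| + 1) :=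
          Filter.eventually_sup.2 ⟨hl.mono fun _ h => h.trans (le_max_left _ _),
            hr.mono fun _ h => h.trans (le_max_right _ _)⟩
        rw [nhdsLT_sup_nhdsGE] at this
        exact ⟨_, nhdsWithin_le_nhds this, _, fun x hx => hx⟩
  obtain ⟨M, hM⟩ := this
  exact ⟨M, fun t h1 h2 => hM t ⟨h1, h2⟩⟩

/-- The one-sided comparison argument. -/
theorem k_compare {k1 k2 H1 H2 l1 u2 : ℝ → ℝ} (c1 : CadlagOn k1) (c2 : CadlagOn k2)
    (z1 : k1 0 = 0) (z2 : k2 0 = 0) {M q : ℝ} (hM : 0 ≤ M)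
    (hs : ∀ s, 0 ≤ s → s ≤ q → M < k1 s - k2 s → l1 s < H1 s ∧ H2 s < u2 s)
    (m1 : ∀ t q : ℝ, 0 ≤ t → t ≤ q → (∀ s : ℝ, t < s → s ≤ q → l1 s < H1 s) → k1 q - k1 t ≤ 0)
    (m2 : ∀ t q : ℝ, 0 ≤ t → t ≤ q → (∀ s : ℝ, t < s → s ≤ q → H2 s < u2 s) → 0 ≤ k2 q - k2 t)
    (j1 : ∀ t : ℝ, 0 < t → l1 t < H1 t → k1 t - Function.leftLim k1 t ≤ 0)
    (j2 : ∀ t : ℝ, 0 < t → H2 t < u2 t → 0 ≤ k2 t - Function.leftLim k2 t)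
    (t : ℝ) (ht : 0 ≤ t) (htq : t ≤ q) : k1 t - k2 t ≤ M := by
  by_contra hcon
  push Not at hcon
  set S : Set ℝ := {s | 0 ≤ s ∧ s ≤ t ∧ k1 s - k2 s ≤ M} with hS
  have h0S : (0:ℝ) ∈ S := ⟨le_rfl, ht, by rw [z1, z2]; simpa using hM⟩
  have hbdd : BddAbove S := ⟨t, fun s hs => hs.2.1⟩
  set σ := sSup S with hσ
  have hσ0 : 0 ≤ σ := le_csSup hbdd h0S
  have hσt : σ ≤ t := csSup_le ⟨0, h0S⟩ fun s hs => hs.2.1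
  have hafter : ∀ s, σ < s → s ≤ t → M < k1 s - k2 s := by
    intro s h1 h2
    by_contra h
    exact absurd (le_csSup hbdd (show s ∈ S from ⟨hσ0.trans h1.le, h2, not_lt.1 h⟩)) (not_le.2 h1)
  by_cases hc : k1 σ - k2 σ ≤ M
  · have a1 := m1 σ t hσ0 hσt fun s h1 h2 =>
      (hs s (hσ0.trans h1.le) (h2.trans htq) (hafter s h1 h2)).1
    have a2 := m2 σ t hσ0 hσt fun s h1 h2 =>
      (hs s (hσ0.trans h1.le) (h2.trans htq) (hafter s h1 h2)).2
    linarith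
  · push Not at hc
    have hpos : 0 < σ := by
      rcases hσ0.eq_or_lt with h | h
      · exfalso; rw [← h, z1, z2] at hc; linarith
      · exact h
    have hb := hs σ hσ0 (hσt.trans htq) hc
    have b1 := j1 σ hpos hb.1
    have b2 := j2 σ hpos hb.2
    obtain ⟨L1, hL1⟩ := c1.2 σ hpos
    obtain ⟨L2, hL2⟩ := c2.2 σ hpos
    rw [leftLim_eq_of_tendsto hL1] at b1
    rw [leftLim_eq_of_tendsto hL2] at b2
    have hlim : M < L1 - L2 := by linarith
    have hev := (hL1.sub hL2).eventually (lt_mem_nhds hlim)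
    obtain ⟨a, ha, hsub⟩ := (mem_nhdsLT_iff_exists_Ioo_subset).1 hev
    obtain ⟨s, hsS, has⟩ := exists_lt_of_lt_csSup ⟨0, h0S⟩ (show a < sSup S from ha)
    have hsσ : s ≤ σ := le_csSup hbdd hsS
    rcases hsσ.eq_or_lt with h | h
    · rw [h] at hsS; exact absurd hsS.2.2 (not_le.2 hc)
    · exact absurd hsS.2.2 (not_le.2 (hsub ⟨has, h⟩))

theorem condH_integrable {Ω : Type*} [MeasurableSpace Ω] {μ : Measure Ω} [IsProbabilityMeasure μ]
    {h : ℝ → ℝ → ℝ} {Mh Lh ch Ch : ℝ} (hH : CondH h Mh Lh ch Ch) {t : ℝ} (ht : 0 ≤ t)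
    {Z : Ω → ℝ} (hZ : Integrable Z μ) : Integrable (fun ω => h t (Z ω)) μ := by
  have hm : Measurable (h t) := hH.meas.comp measurable_prodMk_left
  refine (((integrable_const (1:ℝ)).add hZ.abs).const_mul Mh).mono'
    (hm.comp_aemeasurable hZ.aemeasurable).aestronglyMeasurable ?_
  exact Filter.Eventually.of_forall fun ω => hH.growth t (Z ω) ht

/-- Lower bound for the difference of the means. -/
theorem mean_gap {Ω : Type*} [MeasurableSpace Ω] {μ : Measure Ω} [IsProbabilityMeasure μ]
    {h1 h2 : ℝ → ℝ → ℝ} {Mh1 Lh1 ch1 Ch1 Mh2 Lh2 ch2 Ch2 : ℝ}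
    (hH1 : CondH h1 Mh1 Lh1 ch1 Ch1) (hH2 : CondH h2 Mh2 Lh2 ch2 Ch2)
    {t : ℝ} (ht : 0 ≤ t) {Z1 Z2 : Ω → ℝ} (hZ1 : Integrable Z1 μ) (hZ2 : Integrable Z2 μ)
    {A B : ℝ} (hA : ∀ x, |h1 t x - h2 t x| ≤ A) (hB : (∫ ω, |Z1 ω - Z2 ω| ∂μ) ≤ B)
    (a b : ℝ) :
    (b ≤ a → ch1 * (a - b) - A - Ch2 * B ≤
      (∫ ω, h1 t (Z1 ω + a) ∂μ) - ∫ ω, h2 t (Z2 ω + b) ∂μ) ∧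
    (a ≤ b → ch1 * (b - a) - A - Ch2 * B ≤
      (∫ ω, h2 t (Z2 ω + b) ∂μ) - ∫ ω, h1 t (Z1 ω + a) ∂μ) := by
  have i1 := condH_integrable hH1 ht (hZ1.add (integrable_const a))
  have i2 := condH_integrable hH2 ht (hZ2.add (integrable_const b))
  simp only [Pi.add_apply] at i1 i2
  have i3 : Integrable (fun ω => |Z1 ω - Z2 ω|) μ := (hZ1.sub hZ2).abs
  have hCB := mul_le_mul_of_nonneg_left hB hH2.Ch_pos.le
  have hcalc : ∀ r : ℝ, ∫ ω, (r - Ch2 * |Z1 ω - Z2 ω|) ∂μ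
      = r - Ch2 * ∫ ω, |Z1 ω - Z2 ω| ∂μ := by
    intro r
    rw [integral_sub (integrable_const _) (i3.const_mul _), integral_const_mul]
    simp
  have ii : ∀ r : ℝ, Integrable (fun ω => r - Ch2 * |Z1 ω - Z2 ω|) μ := fun r =>
    (integrable_const r).sub (i3.const_mul _)
  constructor
  · intro hab
    rw [← integral_sub i1 i2]
    have := integral_mono (ii (ch1 * (a - b) - A)) (i1.sub i2) (fun ω => by
      have e1 := hH1.lip_lower t (Z1 ω + a) (Z1 ω + b) ht
      have e2 := (hH1.strict_mono t ht).monotone (show Z1 ω + b ≤ Z1 ω + a by linarith)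
      rw [abs_of_nonneg (sub_nonneg.2 e2), show Z1 ω + a - (Z1 ω + b) = a - b by ring,
        abs_of_nonneg (sub_nonneg.2 hab)] at e1
      have e3 := abs_le.1 (hA (Z1 ω + b))
      have e4 := hH2.lip_upper t (Z1 ω + b) (Z2 ω + b) ht
      rw [show Z1 ω + b - (Z2 ω + b) = Z1 ω - Z2 ω by ring] at e4
      have e5 := abs_le.1 e4
      simp only [Pi.sub_apply]
      linarith [e3.1, e5.1])
    rw [hcalc] at this
    simp only [Pi.sub_apply] at this
    linarith
  · intro hab
    rw [← integral_sub i2 i1]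
    have := integral_mono (ii (ch1 * (b - a) - A)) (i2.sub i1) (fun ω => by
      have e1 := hH1.lip_lower t (Z1 ω + b) (Z1 ω + a) ht
      have e2 := (hH1.strict_mono t ht).monotone (show Z1 ω + a ≤ Z1 ω + b by linarith)
      rw [abs_of_nonneg (sub_nonneg.2 e2), show Z1 ω + b - (Z1 ω + a) = b - a by ring,
        abs_of_nonneg (sub_nonneg.2 hab)] at e1
      have e3 := abs_le.1 (hA (Z1 ω + b))
      have e4 := hH2.lip_upper t (Z1 ω + b) (Z2 ω + b) ht
      rw [show Z1 ω + b - (Z2 ω + b) = Z1 ω - Z2 ω by ring] at e4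
      have e5 := abs_le.1 e4
      simp only [Pi.sub_apply]
      linarith [e3.2, e5.2])
    rw [hcalc] at this
    simp only [Pi.sub_apply] at this
    linarith

/-- Lipschitz continuity of the solution map `(Y, h, l, u) ↦ (X, k)`. -/
theorem stmt_8 {Ω : Type*} [MeasurableSpace Ω] (μ : Measure Ω) [IsProbabilityMeasure μ]
    (h1 h2 : ℝ → ℝ → ℝ) (Mh1 Lh1 ch1 Ch1 Mh2 Lh2 ch2 Ch2 : ℝ)
    (hH1 : CondH h1 Mh1 Lh1 ch1 Ch1) (hH2 : CondH h2 Mh2 Lh2 ch2 Ch2)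
    (Y1 Y2 : ℝ → Ω → ℝ) (hY1 : NiceProcess μ Y1) (hY2 : NiceProcess μ Y2)
    (l1 u1 l2 u2 : ℝ → ℝ)
    (hl1 : CadlagOn l1) (hu1 : CadlagOn u1) (hl2 : CadlagOn l2) (hu2 : CadlagOn u2)
    (hlu1 : ∀ t : ℝ, 0 ≤ t → l1 t ≤ u1 t) (hlu2 : ∀ t : ℝ, 0 ≤ t → l2 t ≤ u2 t)
    (h01 : (∫ ω, h1 0 (Y1 0 ω) ∂μ) ∈ Set.Icc (l1 0) (u1 0))
    (h02 : (∫ ω, h2 0 (Y2 0 ω) ∂μ) ∈ Set.Icc (l2 0) (u2 0))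
    (X1 X2 : ℝ → Ω → ℝ) (k1 k2 : ℝ → ℝ)
    (hsol1 : MeanSP μ h1 Y1 l1 u1 X1 k1) (hsol2 : MeanSP μ h2 Y2 l2 u2 X2 k2)
    (C : ℝ) (hC : C = max ch1⁻¹ (2 * Ch2 * ch1⁻¹ + 1))
    (q : ℝ) (hq : 0 ≤ q) :
    (∀ A B D : ℝ,
      (∀ t x : ℝ, 0 ≤ t → t ≤ q → |h1 t x - h2 t x| ≤ A) →
      (∀ t : ℝ, 0 ≤ t → t ≤ q → (∫ ω, |Y1 t ω - Y2 t ω| ∂μ) ≤ B) →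
      (∀ t : ℝ, 0 ≤ t → t ≤ q → max |l1 t - l2 t| |u1 t - u2 t| ≤ D) →
      ∀ t : ℝ, 0 ≤ t → t ≤ q → |k1 t - k2 t| ≤ C * (A + B + D)) ∧
    (∀ A D : ℝ,
      (∀ t x : ℝ, 0 ≤ t → t ≤ q → |h1 t x - h2 t x| ≤ A) →
      (∀ t : ℝ, 0 ≤ t → t ≤ q → max |l1 t - l2 t| |u1 t - u2 t| ≤ D) →
      (∫⁻ ω, ENNReal.ofReal (sSup ((fun t => |X1 t ω - X2 t ω|) '' Set.Icc 0 q)) ∂μ) ≤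
        ENNReal.ofReal (C + 1) *
            (∫⁻ ω, ENNReal.ofReal (sSup ((fun t => |Y1 t ω - Y2 t ω|) '' Set.Icc 0 q)) ∂μ) +
          ENNReal.ofReal (C * (A + D))) := by
  obtain ⟨-, ck1, z1, e1, b1, m1, j1⟩ := hsol1
  obtain ⟨-, ck2, z2, e2, b2, m2, j2⟩ := hsol2
  have hch := hH1.ch_pos
  have hCh := hH2.Ch_pos
  have hinv : 0 < ch1⁻¹ := inv_pos.2 hch
  have hC1 : ch1⁻¹ ≤ C := hC ▸ le_max_left _ _
  have hC2 : 2 * Ch2 * ch1⁻¹ + 1 ≤ C := hC ▸ le_max_right _ _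
  have hC0 : 0 ≤ C := hinv.le.trans hC1
  have part1 : ∀ A B D : ℝ,
      (∀ t x : ℝ, 0 ≤ t → t ≤ q → |h1 t x - h2 t x| ≤ A) →
      (∀ t : ℝ, 0 ≤ t → t ≤ q → (∫ ω, |Y1 t ω - Y2 t ω| ∂μ) ≤ B) →
      (∀ t : ℝ, 0 ≤ t → t ≤ q → max |l1 t - l2 t| |u1 t - u2 t| ≤ D) →
      ∀ t : ℝ, 0 ≤ t → t ≤ q → |k1 t - k2 t| ≤ C * (A + B + D) := by
    intro A B D hA hB hD t ht htq
    have hA0 : 0 ≤ A := (abs_nonneg _).trans (hA 0 0 le_rfl hq)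
    have hB0 : 0 ≤ B := (integral_nonneg fun _ => abs_nonneg _).trans (hB 0 le_rfl hq)
    have hD0 : 0 ≤ D := ((abs_nonneg _).trans (le_max_left _ _)).trans (hD 0 le_rfl hq)
    set M := ch1⁻¹ * (A + Ch2 * B + D) with hM
    have hM0 : 0 ≤ M := by positivity
    have hcM : ch1 * M = A + Ch2 * B + D := by rw [hM]; field_simp
    have hMC : M ≤ C * (A + B + D) := by
      have w : Ch2 * ch1⁻¹ ≤ C := by
        have : 0 < Ch2 * ch1⁻¹ := by positivity
        linarith
      have w1 := mul_le_mul_of_nonneg_right hC1 hA0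
      have w2 := mul_le_mul_of_nonneg_right w hB0
      have w3 := mul_le_mul_of_nonneg_right hC1 hD0
      have : M = ch1⁻¹ * A + Ch2 * ch1⁻¹ * B + ch1⁻¹ * D := by rw [hM]; ring
      rw [this]; linarith
    have gap := fun s (hs0 : 0 ≤ s) (hsq : s ≤ q) =>
      mean_gap hH1 hH2 hs0 (hY1.integrable s hs0) (hY2.integrable s hs0)
        (fun x => hA s x hs0 hsq) (hB s hs0 hsq) (k1 s) (k2 s)
    have q1 : ∀ s, 0 ≤ s → ∫ ω, h1 s (Y1 s ω + k1 s) ∂μ = ∫ ω, h1 s (X1 s ω) ∂μ := fun s hs =>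
      integral_congr_ae (Filter.Eventually.of_forall fun ω => by simp only [e1 s hs ω])
    have q2 : ∀ s, 0 ≤ s → ∫ ω, h2 s (Y2 s ω + k2 s) ∂μ = ∫ ω, h2 s (X2 s ω) ∂μ := fun s hs =>
      integral_congr_ae (Filter.Eventually.of_forall fun ω => by simp only [e2 s hs ω])
    refine le_trans (abs_le.2 ⟨?_, ?_⟩) hMC
    · have := k_compare (H1 := fun s => ∫ ω, h2 s (X2 s ω) ∂μ)
        (H2 := fun s => ∫ ω, h1 s (X1 s ω) ∂μ) (l1 := l2) (u2 := u1) (q := q)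
        ck2 ck1 z2 z1 hM0 ?_ (fun t q a b => (m2 t q a b).2) (fun t q a b => (m1 t q a b).1)
        (fun t a => (j2 t a).2) (fun t a => (j1 t a).1) t ht htq
      · linarith
      · intro s hs0 hsq hlt
        have g := (gap s hs0 hsq).2 (by linarith)
        rw [q1 s hs0, q2 s hs0] at g
        have p := mul_lt_mul_of_pos_left hlt hch
        obtain ⟨d1, d2⟩ := max_le_iff.1 (hD s hs0 hsq)
        have d1 := abs_le.1 d1
        have d2 := abs_le.1 d2
        have r1 := b1 s hs0
        have r2 := b2 s hs0
        constructor
        · linarith [r1.1, d1.1]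
        · linarith [r2.2, d2.1]
    · have := k_compare (H1 := fun s => ∫ ω, h1 s (X1 s ω) ∂μ)
        (H2 := fun s => ∫ ω, h2 s (X2 s ω) ∂μ) (l1 := l1) (u2 := u2) (q := q)
        ck1 ck2 z1 z2 hM0 ?_ (fun t q a b => (m1 t q a b).2) (fun t q a b => (m2 t q a b).1)
        (fun t a => (j1 t a).2) (fun t a => (j2 t a).1) t ht htq
      · exact this
      · intro s hs0 hsq hlt
        have g := (gap s hs0 hsq).1 (by linarith)
        rw [q1 s hs0, q2 s hs0] at g
        have p := mul_lt_mul_of_pos_left hlt hch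
        obtain ⟨d1, d2⟩ := max_le_iff.1 (hD s hs0 hsq)
        have d1 := abs_le.1 d1
        have d2 := abs_le.1 d2
        have r1 := b1 s hs0
        have r2 := b2 s hs0
        constructor
        · linarith [r2.1, d1.2]
        · linarith [r1.2, d2.2]
  refine ⟨part1, ?_⟩
  intro A D hA hD
  have hA0 : 0 ≤ A := (abs_nonneg _).trans (hA 0 0 le_rfl hq)
  have hD0 : 0 ≤ D := ((abs_nonneg _).trans (le_max_left _ _)).trans (hD 0 le_rfl hq)
  set S : Ω → ℝ := fun ω => sSup ((fun t => |Y1 t ω - Y2 t ω|) '' Set.Icc 0 q) with hS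
  have hle : ∀ ω t, 0 ≤ t → t ≤ q → |Y1 t ω - Y2 t ω| ≤ S ω := by
    intro ω t ht htq
    obtain ⟨M, hM⟩ := cadlag_bdd _ (hY1.cadlag ω) q
    obtain ⟨N, hN⟩ := cadlag_bdd _ (hY2.cadlag ω) q
    refine le_csSup ⟨M + N, ?_⟩ ⟨t, ⟨ht, htq⟩, rfl⟩
    rintro _ ⟨s, ⟨hs0, hsq⟩, rfl⟩
    exact (abs_sub _ _).trans (add_le_add (hM s hs0 hsq) (hN s hs0 hsq))
  have hS0 : ∀ ω, 0 ≤ S ω := fun ω => (abs_nonneg _).trans (hle ω 0 le_rfl hq)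
  set I := ∫⁻ ω, ENNReal.ofReal (S ω) ∂μ with hI
  by_cases hfin : I = ⊤
  · have : ENNReal.ofReal (C + 1) * I = ⊤ := by
      rw [hfin]; exact ENNReal.mul_top (by simp; linarith)
    rw [this]; simp
  have hB : ∀ t : ℝ, 0 ≤ t → t ≤ q → (∫ ω, |Y1 t ω - Y2 t ω| ∂μ) ≤ I.toReal := by
    intro t ht htq
    have hint : Integrable (fun ω => |Y1 t ω - Y2 t ω|) μ :=
      ((hY1.integrable t ht).sub (hY2.integrable t ht)).abs
    rw [integral_eq_lintegral_of_nonneg_ae (Filter.Eventually.of_forall fun _ => abs_nonneg _)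
      hint.aestronglyMeasurable]
    exact ENNReal.toReal_mono hfin
      (lintegral_mono fun ω => ENNReal.ofReal_le_ofReal (hle ω t ht htq))
  have hk := part1 A I.toReal D hA hB hD
  have hI0 : 0 ≤ I.toReal := ENNReal.toReal_nonneg
  have hK0 : 0 ≤ C * (A + I.toReal + D) := by positivity
  calc (∫⁻ ω, ENNReal.ofReal (sSup ((fun t => |X1 t ω - X2 t ω|) '' Set.Icc 0 q)) ∂μ)
      ≤ ∫⁻ ω, (ENNReal.ofReal (S ω) + ENNReal.ofReal (C * (A + I.toReal + D))) ∂μ := by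
        refine lintegral_mono fun ω => ?_
        rw [← ENNReal.ofReal_add (hS0 ω) hK0]
        refine ENNReal.ofReal_le_ofReal (csSup_le ⟨_, 0, ⟨le_rfl, hq⟩, rfl⟩ ?_)
        rintro _ ⟨t, ⟨ht, htq⟩, rfl⟩
        simp only
        rw [e1 t ht ω, e2 t ht ω,
          show Y1 t ω + k1 t - (Y2 t ω + k2 t) = (Y1 t ω - Y2 t ω) + (k1 t - k2 t) by ring]
        exact (abs_add_le _ _).trans (add_le_add (hle ω t ht htq) (hk t ht htq))
    _ = I + ENNReal.ofReal (C * (A + I.toReal + D)) := by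
        rw [lintegral_add_right _ measurable_const]; simp [hI]
    _ = ENNReal.ofReal (C + 1) * I + ENNReal.ofReal (C * (A + D)) := by
        have : C * (A + I.toReal + D) = C * I.toReal + C * (A + D) := by ring
        rw [this, ENNReal.ofReal_add (by positivity) (by positivity), ENNReal.ofReal_mul hC0,
          ENNReal.ofReal_toReal hfin, ENNReal.ofReal_add hC0 zero_le_one, ENNReal.ofReal_one]
        ring
    _ ≤ _ := le_rfl
end
end
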